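/- arXiv:2003.12926 — 4 statements merged into one kernel-verified Lean document; each statement's English description precedes it below -/
import Mathlib

section
/- For every integer k and every real number t with |t| < 1, the series identity ∑_{m=0}^∞ (arsinh t)^{2m} / ((2m)! (2m+1)^k) = ∑_{n=0}^∞ 𝔠^{(k)}_{2n} · t^{2n}/(2n)! holds, where 𝔠^{(k)}_{2n} = ∑_{m=0}^{n} (-4)^{n-m} T(n,m)/(2m+1)^k. In other words, the poly-Cauchy numbers with level 2 defined by the generating function Lif_{2,k}(arsinh t) are given explicitly by 𝔠^{(k)}_{2n} = ∑_{m=1}^{n} (-4)^{n-m} T(n,m)/(2m+1)^k for n ≥ 1. -/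
/-- Stirling numbers of the first kind with level 2:
`T2 0 0 = 1`, `T2 n m = 0` for `m > n` or (`n ≥ 1` and `m = 0`),
and `T2 n m = T2 (n-1) (m-1) + (n-1)^2 * T2 (n-1) m`. -/
def T2 : ℕ → ℕ → ℕ
  | 0, 0 => 1
  | 0, _ + 1 => 0
  | _ + 1, 0 => 0
  | n + 1, m + 1 => T2 n m + n ^ 2 * T2 n (m + 1)

/-- Poly-Cauchy numbers with level 2: `polyCauchy2 k n = 𝔠^{(k)}_{2n}`. -/
def polyCauchy2 (k : ℤ) (n : ℕ) : ℚ :=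
  ∑ m ∈ Finset.range (n + 1), (-4 : ℚ) ^ (n - m) * (T2 n m : ℚ) / (2 * (m : ℚ) + 1) ^ k

/-!
Write `f m t = arsinh t ^ (2 * m) / (2 * m)!`. Since `√(1 + t ^ 2) * d/dt` takes
`arsinh t ^ (n + 1) / (n + 1)!` to `arsinh t ^ n / n!`, applying it twice takes `f (m + 1)` to
`f m`; that is, `g = f (m + 1)` satisfies `(1 + t ^ 2) * d²g/dt² + t * dg/dt = f m`. On power
series in `x = t ^ 2` this is the recurrence of `T2`, so the coefficient of `t ^ (2 * n)` in `f m`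
is `(-4) ^ (n - m) * T2 n m / (2 * n)!`.

The identity is then an interchange of two summations. It is legitimate for weights of at most
geometric growth because `∑ m, T2 n m * R ^ m * 4 ^ (n - m) = ∏ j < n, (R + 4 * j ^ 2)`, which
is `(2 * n)!` up to factors subexponential in `n`; and the weights `(2 * m + 1) ^ (-k)` grow at
most geometrically.
-/

open FormalMultilinearSeries

section PowerSeries

theorem hasFPowerSeriesOnBall_ofScalarsSum {𝕜 : Type*} [RCLike 𝕜] {a : ℕ → 𝕜} {r : NNReal}
    (hr : 0 < r)
    (h : ∀ x : 𝕜, ‖x‖ < r → Summable fun n ↦ a n * x ^ n) :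
    HasFPowerSeriesOnBall (ofScalarsSum a) (ofScalars 𝕜 a) 0 r := by
  have radius_le : (r : ENNReal) ≤ (ofScalars 𝕜 a).radius := by
    refine ENNReal.le_of_forall_nnreal_lt fun s hs ↦ ?_
    refine le_radius_of_summable _ ?_
    have hs' : ‖((s : ℝ) : 𝕜)‖ < r := by simpa using hs
    simpa [ofScalars_norm] using (h _ hs').norm
  have r_pos : 0 < (r : ENNReal) := by exact_mod_cast hr
  exact ((ofScalars 𝕜 a).hasFPowerSeriesOnBall (r_pos.trans_le radius_le)).mono r_pos radius_le

variable {𝕜 : Type*} [NontriviallyNormedField 𝕜] {a : ℕ → 𝕜} {f : 𝕜 → 𝕜} {r : ENNReal} {x : 𝕜}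

theorem hasSum_of_hasFPowerSeriesOnBall_ofScalars
    (hf : HasFPowerSeriesOnBall f (ofScalars 𝕜 a) 0 r) (hx : x ∈ Metric.eball 0 r) :
    HasSum (fun n ↦ a n * x ^ n) (f x) := by
  simpa [ofScalars_apply_eq, mul_comm] using hf.hasSum hx

variable [CompleteSpace 𝕜]

theorem hasFPowerSeriesOnBall_deriv_ofScalars
    (hf : HasFPowerSeriesOnBall f (ofScalars 𝕜 a) 0 r) :
    HasFPowerSeriesOnBall (deriv f) (ofScalars 𝕜 fun n ↦ (n + 1) * a (n + 1)) 0 r := by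
  have series_eq : (ContinuousLinearMap.apply 𝕜 𝕜 (1 : 𝕜)).compFormalMultilinearSeries
      (ofScalars 𝕜 a).derivSeries = ofScalars 𝕜 fun n ↦ (n + 1) * a (n + 1) := by
    refine FormalMultilinearSeries.ext fun n ↦ ?_
    refine (mkPiRing_coeff_eq _ n).symm.trans (.trans ?_ (mkPiRing_coeff_eq _ n))
    refine congrArg _ ?_
    calc
      _ = (ofScalars 𝕜 a).derivSeries.coeff n 1 := rfl
      _ = _ := by simp
  rw [← series_eq]
  exact (ContinuousLinearMap.apply 𝕜 𝕜 (1 : 𝕜)).comp_hasFPowerSeriesOnBall hf.fderiv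

theorem hasSum_nat_mul_of_hasFPowerSeriesOnBall_ofScalars
    (hf : HasFPowerSeriesOnBall f (ofScalars 𝕜 a) 0 r) (hx : x ∈ Metric.eball 0 r) :
    HasSum (fun n : ℕ ↦ n * a n * x ^ n) (x * deriv f x) := by
  have shifted := (hasSum_of_hasFPowerSeriesOnBall_ofScalars
    (hasFPowerSeriesOnBall_deriv_ofScalars hf) hx).mul_left x
  rw [← hasSum_nat_add_iff' 1]
  convert! shifted using 1
  · ext n
    push_cast
    ring
  · simp

end PowerSeries

theorem hasDerivAt_comp_sq {𝕜 : Type*} [NontriviallyNormedField 𝕜] {F : 𝕜 → 𝕜} {F' t : 𝕜}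
    (hF : HasDerivAt F F' (t ^ 2)) : HasDerivAt (fun s ↦ F (s ^ 2)) (2 * t * F') t := by
  refine (HasDerivAt.comp (h₂ := F) (h := fun s ↦ s ^ 2) t hF (hasDerivAt_pow 2 t)).congr_deriv ?_
  rw [Nat.cast_ofNat, pow_one, mul_comm]

theorem eqOn_ball_of_hasDerivAt {𝕜 E : Type*} [RCLike 𝕜] [NormedAddCommGroup E] [NormedSpace 𝕜 E]
    {f g f' : 𝕜 → E} {x : 𝕜} {r : ℝ} (hf : ∀ y ∈ Metric.ball x r, HasDerivAt f (f' y) y)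
    (hg : ∀ y ∈ Metric.ball x r, HasDerivAt g (f' y) y) (hfg : f x = g x) :
    Set.EqOn f g (Metric.ball x r) := by
  intro y hy
  refine Metric.isOpen_ball.eqOn_of_deriv_eq Metric.isPreconnected_ball
    (fun z hz ↦ (hf z hz).differentiableAt.differentiableWithinAt)
    (fun z hz ↦ (hg z hz).differentiableAt.differentiableWithinAt)
    (fun z hz ↦ (hf z hz).deriv.trans (hg z hz).deriv.symm)
    (Metric.mem_ball_self (Metric.pos_of_mem_ball hy)) hfg hy

theorem factorial_two_mul_succ (n : ℕ) :
    ((2 * (n + 1)).factorial : ℝ) = (2 * n + 2) * (2 * n + 1) * (2 * n).factorial := by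
  rw [show 2 * (n + 1) = 2 * n + 1 + 1 by ring, Nat.factorial_succ, Nat.factorial_succ]
  push_cast
  ring

section LevelTwoStirling

theorem T2_eq_zero_of_lt : ∀ {n m : ℕ}, n < m → T2 n m = 0
  | 0, _ + 1, _ => rfl
  | n + 1, m + 1, h => by
    rw [T2, T2_eq_zero_of_lt (show n < m by omega), T2_eq_zero_of_lt (show n < m + 1 by omega),
      mul_zero, add_zero]

section Semiring

variable {R : Type*} [CommSemiring R]

theorem sq_mul_sum_T2_add_one (f : ℕ → R) (n : ℕ) :
    (n : R) ^ 2 * ∑ m ∈ Finset.range (n + 1), (T2 n (m + 1) : R) * f (m + 1) =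
      (n : R) ^ 2 * ∑ m ∈ Finset.range (n + 1), (T2 n m : R) * f m := by
  have first_term : (n : R) ^ 2 * ((T2 n 0 : R) * f 0) = 0 := by
    cases n <;> simp [T2]
  have last_term : (T2 n (n + 1) : R) * f (n + 1) = 0 := by
    simp [T2_eq_zero_of_lt n.lt_succ_self]
  have := Finset.sum_range_succ' (fun m ↦ (T2 n m : R) * f m) (n + 1)
  rw [Finset.sum_range_succ, last_term, add_zero] at this
  rw [this, mul_add, first_term, add_zero]

theorem sum_T2_mul_pow_mul_pow (x y : R) (n : ℕ) :
    ∑ m ∈ Finset.range (n + 1), (T2 n m : R) * (x ^ m * y ^ (n - m)) =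
      ∏ j ∈ Finset.range n, (x + (j : R) ^ 2 * y) := by
  induction n with
  | zero => simp [T2]
  | succ n ih =>
    calc
      _ = x * ∑ m ∈ Finset.range (n + 1), (T2 n m : R) * (x ^ m * y ^ (n - m)) + (n : R) ^ 2 *
            ∑ m ∈ Finset.range (n + 1),
              (T2 n (m + 1) : R) * (x ^ (m + 1) * y ^ (n + 1 - (m + 1))) := by
        rw [Finset.sum_range_succ']
        simp only [T2, Finset.mul_sum, ← Finset.sum_add_distrib, Nat.cast_zero, zero_mul, add_zero]
        refine Finset.sum_congr rfl fun m _ ↦ ?_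
        push_cast [Nat.add_sub_add_right]
        ring
      _ = x * ∑ m ∈ Finset.range (n + 1), (T2 n m : R) * (x ^ m * y ^ (n - m)) + (n : R) ^ 2 *
            ∑ m ∈ Finset.range (n + 1), (T2 n m : R) * (x ^ m * y ^ (n + 1 - m)) := by
        rw [sq_mul_sum_T2_add_one fun m ↦ x ^ m * y ^ (n + 1 - m)]
      _ = (x + (n : R) ^ 2 * y) *
            ∑ m ∈ Finset.range (n + 1), (T2 n m : R) * (x ^ m * y ^ (n - m)) := by
        rw [add_mul, mul_assoc _ y, Finset.mul_sum _ _ y]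
        congr 2
        refine Finset.sum_congr rfl fun m hm ↦ ?_
        rw [Nat.sub_add_comm (Finset.mem_range_succ_iff.mp hm), pow_succ]
        ring
      _ = _ := by rw [ih, Finset.prod_range_succ, mul_comm]

end Semiring

/-- The coefficient of `t ^ (2 * n)` in the power series of `arsinh t ^ (2 * m) / (2 * m)!`.
The truncated subtraction is harmless because `T2 n m = 0` for `n < m`. -/
noncomputable def arsinhPowCoeff (m n : ℕ) : ℝ :=
  (-4) ^ (n - m) * T2 n m / (2 * n).factorial

theorem arsinhPowCoeff_eq_zero_of_lt {m n : ℕ} (h : n < m) : arsinhPowCoeff m n = 0 := by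
  simp [arsinhPowCoeff, T2_eq_zero_of_lt h]

theorem arsinhPowCoeff_zero_left (n : ℕ) : arsinhPowCoeff 0 n = if n = 0 then 1 else 0 := by
  cases n <;> simp [arsinhPowCoeff, T2]

theorem arsinhPowCoeff_succ_succ (m n : ℕ) :
    (2 * n + 2) * (2 * n + 1) * arsinhPowCoeff (m + 1) (n + 1) +
      4 * (n : ℝ) ^ 2 * arsinhPowCoeff (m + 1) n = arsinhPowCoeff m n := by
  have numerator : (-4 : ℝ) ^ (n - m) * T2 (n + 1) (m + 1) +
      4 * (n : ℝ) ^ 2 * ((-4) ^ (n - (m + 1)) * T2 n (m + 1)) = (-4) ^ (n - m) * T2 n m := by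
    rw [T2]
    push_cast
    rcases Nat.lt_or_ge m n with h | h
    · rw [show n - m = n - (m + 1) + 1 by omega]
      ring
    · simp [T2_eq_zero_of_lt (Nat.lt_succ_of_le h)]
  simp only [arsinhPowCoeff, factorial_two_mul_succ, Nat.add_sub_add_right, ← numerator]
  field_simp

theorem abs_arsinhPowCoeff (m n : ℕ) :
    |arsinhPowCoeff m n| = 4 ^ (n - m) * T2 n m / (2 * n).factorial := by
  simp [arsinhPowCoeff, abs_div, abs_mul]

theorem hasSum_abs_arsinhPowCoeff_mul_pow (R : ℝ) (n : ℕ) :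
    HasSum (fun m ↦ |arsinhPowCoeff m n| * R ^ m)
      ((∏ j ∈ Finset.range n, (R + j ^ 2 * 4)) / (2 * n).factorial) := by
  rw [← sum_T2_mul_pow_mul_pow, Finset.sum_div]
  have term_eq (m : ℕ) : T2 n m * (R ^ m * 4 ^ (n - m)) / ((2 * n).factorial : ℝ) =
      |arsinhPowCoeff m n| * R ^ m := by
    rw [abs_arsinhPowCoeff]
    ring
  simp only [term_eq]
  refine hasSum_sum_of_ne_finset_zero fun m hm ↦ ?_
  rw [arsinhPowCoeff_eq_zero_of_lt (by simpa using hm), abs_zero, zero_mul]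

theorem summable_prod_div_factorial_mul_pow (R : ℝ) {x : ℝ} (hx : |x| < 1) :
    Summable fun n : ℕ ↦
      (∏ j ∈ Finset.range n, (R + (j : ℝ) ^ 2 * 4)) / (2 * n).factorial * x ^ n := by
  refine summable_of_ratio_norm_eventually_le hx ?_
  filter_upwards [Filter.eventually_ge_atTop ⌈|R|⌉₊] with n hn
  have R_le : |R| ≤ n := Nat.ceil_le.mp hn
  have factor_le : |R + (n : ℝ) ^ 2 * 4| ≤ (2 * (n : ℝ) + 2) * (2 * n + 1) := by
    rw [abs_le] at R_le ⊢
    constructor <;> nlinarith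
  have ratio (P : ℝ) : P * (R + (n : ℝ) ^ 2 * 4) /
        ((2 * (n : ℝ) + 2) * (2 * n + 1) * (2 * n).factorial) * x ^ (n + 1) =
      (R + (n : ℝ) ^ 2 * 4) / ((2 * n + 2) * (2 * n + 1)) *
        (x * (P / (2 * n).factorial * x ^ n)) := by
    field_simp
    ring
  have factor_norm_le : ‖(R + (n : ℝ) ^ 2 * 4) / ((2 * n + 2) * (2 * n + 1))‖ ≤ 1 := by
    rw [norm_div, Real.norm_of_nonneg (show (0 : ℝ) ≤ (2 * n + 2) * (2 * n + 1) by positivity)]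
    exact div_le_one_of_le₀ factor_le (by positivity)
  rw [Finset.prod_range_succ, factorial_two_mul_succ, ratio, norm_mul, norm_mul x]
  exact mul_le_of_le_one_left (by positivity) factor_norm_le

theorem summable_abs_arsinhPowCoeff_mul_pow_mul_pow {R x : ℝ} (hR : 0 ≤ R) (hx : |x| < 1) :
    Summable fun p : ℕ × ℕ ↦ |arsinhPowCoeff p.2 p.1| * R ^ p.2 * |x| ^ p.1 := by
  have row_hasSum (n : ℕ) := (hasSum_abs_arsinhPowCoeff_mul_pow R n).mul_right (|x| ^ n)
  refine (summable_prod_of_nonneg fun p ↦ ?_).mpr ⟨fun n ↦ (row_hasSum n).summable, ?_⟩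
  · exact mul_nonneg (mul_nonneg (abs_nonneg _) (pow_nonneg hR _)) (pow_nonneg (abs_nonneg x) _)
  · simp only [(row_hasSum _).tsum_eq]
    exact summable_prod_div_factorial_mul_pow R (by rwa [abs_abs])

theorem summable_arsinhPowCoeff_mul_pow (m : ℕ) {x : ℝ} (hx : |x| < 1) :
    Summable fun n ↦ arsinhPowCoeff m n * x ^ n := by
  have := (summable_abs_arsinhPowCoeff_mul_pow_mul_pow zero_le_one hx).prod_symm.prod_factor m
  exact .of_norm (by simpa [abs_mul] using this)

end LevelTwoStirling

section ArsinhPow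

/-- The sum of `arsinhPowCoeff m n * x ^ n` over `n`; at `x = t ^ 2` with `|t| < 1` it is
`arsinh t ^ (2 * m) / (2 * m)!`. Working in the variable `x` keeps the differential equation
for the even function `arsinh t ^ (2 * m)` free of half-empty power series. -/
noncomputable def arsinhPowSeries (m : ℕ) : ℝ → ℝ :=
  ofScalarsSum (arsinhPowCoeff m)

theorem hasFPowerSeriesOnBall_arsinhPowSeries (m : ℕ) :
    HasFPowerSeriesOnBall (arsinhPowSeries m) (ofScalars ℝ (arsinhPowCoeff m)) 0 1 :=
  hasFPowerSeriesOnBall_ofScalarsSum one_pos fun _ hx ↦ summable_arsinhPowCoeff_mul_pow m hx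

theorem analyticAt_arsinhPowSeries (m : ℕ) {x : ℝ} (hx : |x| < 1) :
    AnalyticAt ℝ (arsinhPowSeries m) x :=
  (hasFPowerSeriesOnBall_arsinhPowSeries m).analyticAt_of_mem (by simpa [← ofReal_norm] using hx)

theorem arsinhPowSeries_succ_ode (m : ℕ) {x : ℝ} (hx : |x| < 1) :
    4 * x * (1 + x) * deriv (deriv (arsinhPowSeries (m + 1))) x +
      (2 + 4 * x) * deriv (arsinhPowSeries (m + 1)) x = arsinhPowSeries m x := by
  set b := arsinhPowCoeff (m + 1)
  set F := arsinhPowSeries (m + 1)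
  have hx' : x ∈ Metric.eball 0 1 := by
    simpa [← ofReal_norm] using hx
  have hF : HasFPowerSeriesOnBall F (ofScalars ℝ b) 0 1 :=
    hasFPowerSeriesOnBall_arsinhPowSeries (m + 1)
  have hF' := hasFPowerSeriesOnBall_deriv_ofScalars hF
  have sum_F' : HasSum (fun n : ℕ ↦ (n + 1) * b (n + 1) * x ^ n) (deriv F x) :=
    hasSum_of_hasFPowerSeriesOnBall_ofScalars hF' hx'
  have sum_xF' : HasSum (fun n : ℕ ↦ n * b n * x ^ n) (x * deriv F x) :=
    hasSum_nat_mul_of_hasFPowerSeriesOnBall_ofScalars hF hx'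
  have sum_xF'' : HasSum (fun n : ℕ ↦ n * ((n + 1) * b (n + 1)) * x ^ n)
      (x * deriv (deriv F) x) :=
    hasSum_nat_mul_of_hasFPowerSeriesOnBall_ofScalars hF' hx'
  have sum_x2F'' : HasSum (fun n : ℕ ↦ n * (n - 1) * b n * x ^ n)
      (x * (x * deriv (deriv F) x)) := by
    rw [← hasSum_nat_add_iff' 1]
    convert! sum_xF''.mul_left x using 1
    · ext n
      push_cast
      ring
    · simp
  have sum_ode := ((sum_xF''.add sum_x2F'').mul_left 4).add ((sum_F'.mul_left 2).add
    (sum_xF'.mul_left 4))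
  have sum_series : HasSum (fun n ↦ arsinhPowCoeff m n * x ^ n) (arsinhPowSeries m x) :=
    hasSum_of_hasFPowerSeriesOnBall_ofScalars (hasFPowerSeriesOnBall_arsinhPowSeries m) hx'
  refine HasSum.unique ?_ sum_series
  convert! sum_ode using 1
  · ext n
    rw [← arsinhPowCoeff_succ_succ m n]
    ring
  · ring

theorem hasDerivAt_sqrt_mul_deriv_comp_sq {F : ℝ → ℝ} {t : ℝ}
    (hF : DifferentiableAt ℝ (deriv F) (t ^ 2)) :
    HasDerivAt (fun s ↦ √(1 + s ^ 2) * (2 * s * deriv F (s ^ 2)))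
      ((4 * t ^ 2 * (1 + t ^ 2) * deriv (deriv F) (t ^ 2) +
        (2 + 4 * t ^ 2) * deriv F (t ^ 2)) / √(1 + t ^ 2)) t := by
  have one_add_sq_pos : 0 < 1 + t ^ 2 := by positivity
  have sqrt_deriv : HasDerivAt (fun s ↦ √(1 + s ^ 2)) (2 * t * (1 / (2 * √(1 + t ^ 2)))) t :=
    hasDerivAt_comp_sq (((hasDerivAt_id (t ^ 2)).const_add 1).sqrt one_add_sq_pos.ne')
  have chain_deriv : HasDerivAt (fun s ↦ 2 * s * deriv F (s ^ 2))
      (2 * 1 * deriv F (t ^ 2) + 2 * t * (2 * t * deriv (deriv F) (t ^ 2))) t :=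
    ((hasDerivAt_id t).const_mul 2).fun_mul (hasDerivAt_comp_sq hF.hasDerivAt)
  refine (sqrt_deriv.fun_mul chain_deriv).congr_deriv ?_
  have sq_sqrt : √(1 + t ^ 2) ^ 2 = 1 + t ^ 2 := Real.sq_sqrt one_add_sq_pos.le
  field_simp
  rw [sq_sqrt]
  ring

theorem hasDerivAt_arsinh_pow_succ_div_factorial (n : ℕ) (t : ℝ) :
    HasDerivAt (fun s ↦ Real.arsinh s ^ (n + 1) / (n + 1).factorial)
      (Real.arsinh t ^ n / n.factorial / √(1 + t ^ 2)) t := by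
  refine (((Real.hasDerivAt_arsinh t).pow (n + 1)).div_const _).congr_deriv ?_
  rw [Nat.factorial_succ, Nat.add_sub_cancel]
  push_cast
  field_simp

theorem sqrt_mul_deriv_arsinhPowSeries_comp_sq (m : ℕ)
    (h : Set.EqOn (fun t ↦ arsinhPowSeries m (t ^ 2))
      (fun t ↦ Real.arsinh t ^ (2 * m) / (2 * m).factorial) (Metric.ball 0 1)) :
    Set.EqOn (fun t ↦ √(1 + t ^ 2) * (2 * t * deriv (arsinhPowSeries (m + 1)) (t ^ 2)))
      (fun t ↦ Real.arsinh t ^ (2 * m + 1) / (2 * m + 1).factorial) (Metric.ball 0 1) := by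
  refine eqOn_ball_of_hasDerivAt (fun t ht ↦ ?_)
    (fun t _ ↦ hasDerivAt_arsinh_pow_succ_div_factorial (2 * m) t) (by simp)
  have sq_lt_one : |t ^ 2| < 1 := by simpa using ht
  have deriv_differentiable : DifferentiableAt ℝ (deriv (arsinhPowSeries (m + 1))) (t ^ 2) :=
    (analyticAt_arsinhPowSeries (m + 1) sq_lt_one).deriv.differentiableAt
  refine (hasDerivAt_sqrt_mul_deriv_comp_sq deriv_differentiable).congr_deriv ?_
  rw [arsinhPowSeries_succ_ode m sq_lt_one]
  exact congrArg (· / √(1 + t ^ 2)) (h ht)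

theorem arsinhPowSeries_sq (m : ℕ) :
    Set.EqOn (fun t ↦ arsinhPowSeries m (t ^ 2))
      (fun t ↦ Real.arsinh t ^ (2 * m) / (2 * m).factorial) (Metric.ball 0 1) := by
  induction m with
  | zero =>
    intro t _
    simp [arsinhPowSeries, ofScalars_sum_eq, arsinhPowCoeff_zero_left]
  | succ m ih =>
    refine eqOn_ball_of_hasDerivAt (fun t ht ↦ ?_)
      (fun t _ ↦ hasDerivAt_arsinh_pow_succ_div_factorial (2 * m + 1) t) ?_
    · have sq_lt_one : |t ^ 2| < 1 := by simpa using ht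
      have sqrt_pos : 0 < √(1 + t ^ 2) := by positivity
      refine (hasDerivAt_comp_sq (analyticAt_arsinhPowSeries (m + 1)
        sq_lt_one).differentiableAt.hasDerivAt).congr_deriv ?_
      rw [eq_div_iff sqrt_pos.ne', mul_comm]
      exact sqrt_mul_deriv_arsinhPowSeries_comp_sq m ih ht
    · simp [arsinhPowSeries, arsinhPowCoeff_eq_zero_of_lt]

theorem hasSum_arsinhPowCoeff_mul_pow (m : ℕ) {t : ℝ} (ht : |t| < 1) :
    HasSum (fun n ↦ arsinhPowCoeff m n * t ^ (2 * n))
      (Real.arsinh t ^ (2 * m) / (2 * m).factorial) := by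
  have ht' : t ∈ Metric.ball 0 1 := by simpa using ht
  have sq_mem : t ^ 2 ∈ Metric.eball (0 : ℝ) 1 := by simpa [← ofReal_norm] using ht
  have sum_eq : arsinhPowSeries m (t ^ 2) = Real.arsinh t ^ (2 * m) / (2 * m).factorial :=
    arsinhPowSeries_sq m ht'
  rw [← sum_eq]
  simpa only [pow_mul] using hasSum_of_hasFPowerSeriesOnBall_ofScalars
    (hasFPowerSeriesOnBall_arsinhPowSeries m) sq_mem

end ArsinhPow

theorem hasSum_pow_smul_sum_arsinhPowCoeff_smul {E : Type*} [NormedAddCommGroup E]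
    [NormedSpace ℝ E] [CompleteSpace E] {w : ℕ → E} {C R t : ℝ} (hR : 0 ≤ R)
    (hw : ∀ m, ‖w m‖ ≤ C * R ^ m) (ht : |t| < 1) :
    HasSum (fun n ↦ t ^ (2 * n) • ∑ m ∈ Finset.range (n + 1), arsinhPowCoeff m n • w m)
      (∑' m, (Real.arsinh t ^ (2 * m) / (2 * m).factorial) • w m) := by
  set f : ℕ × ℕ → E := fun p ↦ (arsinhPowCoeff p.2 p.1 * t ^ (2 * p.1)) • w p.2
  have f_summable : Summable f := by
    have sq_lt_one : |t ^ 2| < 1 := by simpa using ht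
    refine .of_norm_bounded
      ((summable_abs_arsinhPowCoeff_mul_pow_mul_pow hR sq_lt_one).mul_left C) fun p ↦ ?_
    calc
      _ = |arsinhPowCoeff p.2 p.1| * |t ^ 2| ^ p.1 * ‖w p.2‖ := by
        simp [f, norm_smul, pow_mul]
      _ ≤ |arsinhPowCoeff p.2 p.1| * |t ^ 2| ^ p.1 * (C * R ^ p.2) := by
        gcongr
        exact hw p.2
      _ = _ := by ring
  have sum_over_m (n : ℕ) : HasSum (fun m ↦ f (n, m))
      (t ^ (2 * n) • ∑ m ∈ Finset.range (n + 1), arsinhPowCoeff m n • w m) := by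
    simp only [Finset.smul_sum, smul_smul, mul_comm (t ^ (2 * n))]
    refine hasSum_sum_of_ne_finset_zero fun m hm ↦ ?_
    simp [f, arsinhPowCoeff_eq_zero_of_lt (show n < m by simpa using hm)]
  have sum_over_n (m : ℕ) : HasSum (fun n ↦ f (n, m))
      ((Real.arsinh t ^ (2 * m) / (2 * m).factorial) • w m) :=
    (hasSum_arsinhPowCoeff_mul_pow m ht).smul_const (w m)
  have swapped : HasSum (f ∘ Prod.swap) (∑' p, f p) :=
    (Equiv.prodComm ℕ ℕ).hasSum_iff.mpr f_summable.hasSum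
  rw [(swapped.prod_fiberwise sum_over_n).tsum_eq]
  exact f_summable.hasSum.prod_fiberwise sum_over_m

theorem abs_inv_two_mul_add_one_zpow_le (k : ℤ) (m : ℕ) :
    |((2 * (m : ℝ) + 1) ^ k)⁻¹| ≤ (3 ^ k.natAbs) ^ m := by
  have one_le : 1 ≤ 2 * (m : ℝ) + 1 := by simp
  have le_three_pow : 2 * (m : ℝ) + 1 ≤ 3 ^ m := by
    have bernoulli := one_add_mul_le_pow (show (-2 : ℝ) ≤ 2 by norm_num) m
    norm_num at bernoulli
    linarith
  calc
    _ = (2 * (m : ℝ) + 1) ^ (-k) := by rw [zpow_neg, abs_of_pos (by positivity)]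
    _ ≤ (2 * (m : ℝ) + 1) ^ (k.natAbs : ℤ) := zpow_le_zpow_right₀ one_le (by omega)
    _ ≤ (3 ^ m) ^ k.natAbs := by
      rw [zpow_natCast]
      gcongr
    _ = _ := pow_right_comm _ _ _

theorem polyCauchy2_div_factorial (k : ℤ) (n : ℕ) :
    (polyCauchy2 k n : ℝ) / (2 * n).factorial =
      ∑ m ∈ Finset.range (n + 1), arsinhPowCoeff m n * ((2 * (m : ℝ) + 1) ^ k)⁻¹ := by
  rw [polyCauchy2, Rat.cast_sum, Finset.sum_div]
  refine Finset.sum_congr rfl fun m _ ↦ ?_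
  push_cast [arsinhPowCoeff]
  ring

theorem statement0 (k : ℤ) (t : ℝ) (ht : |t| < 1) :
    ∑' m : ℕ, (Real.arsinh t) ^ (2 * m) /
        ((Nat.factorial (2 * m) : ℝ) * (2 * (m : ℝ) + 1) ^ k) =
    ∑' n : ℕ, (polyCauchy2 k n : ℝ) * t ^ (2 * n) / (Nat.factorial (2 * n) : ℝ) := by
  have weighted := hasSum_pow_smul_sum_arsinhPowCoeff_smul
    (w := fun m ↦ ((2 * (m : ℝ) + 1) ^ k)⁻¹) (C := 1) (by positivity)
    (fun m ↦ (abs_inv_two_mul_add_one_zpow_le k m).trans_eq (one_mul _).symm) ht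
  simp only [smul_eq_mul, ← polyCauchy2_div_factorial] at weighted
  convert! weighted.tsum_eq.symm using 3
  · rw [← div_div, div_eq_mul_inv _ ((_ : ℝ) ^ k)]
  · ring
end

section
/- For every integer n ≥ 1, the four-fold convolution ∑_{i₁+i₂+i₃+i₄=n, iⱼ≥0} (2n)!/((2i₁)!(2i₂)!(2i₃)!(2i₄)!) · 𝔠_{2i₁} 𝔠_{2i₂} 𝔠_{2i₃} 𝔠_{2i₄} = (2n)!/6 · ∑_{l=0}^{n} (-1)^{n-l}(2n-2l-3)!!(2l-1)(2l-2)(2l-3)/(2^{n-l}(n-l)!(2l)!) · 𝔠_{2l} + (2n)!/6 · ∑_{l=1}^{n} (-1)^{n-l}(2n-2l-3)!!(2l)(2l-1)(2l-3)³/(2^{n-l}(n-l)!(2l)!) · 𝔠_{2l-2}. -/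
/-- Cauchy numbers with level 2: `cauchy2 n = 𝔠_{2n}`. -/
def cauchy2 (n : ℕ) : ℚ :=
  ∑ m ∈ Finset.range (n + 1), (-4 : ℚ) ^ (n - m) * (T2 n m : ℚ) / (2 * (m : ℚ) + 1)

/-- `odFact i = (2i-1)!!`, with `odFact 0 = (-1)!! = 1`. -/
def odFact : ℕ → ℚ
  | 0 => 1
  | i + 1 => (2 * (i : ℚ) + 1) * odFact i

/-- `ddf j = (2j-1)!!`, the odd double factorial extended to all integers:
for `j ≥ 0` it is `(2j-1)(2j-3)⋯1` (with `(-1)!! = 1`), and for `j = -i < 0`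
it is `(-(2i+1))!! = (-1)^i/(2i-1)!!`. -/
def ddf (j : ℤ) : ℚ :=
  if 0 ≤ j then odFact j.toNat else (-1 : ℚ) ^ (-j).toNat / odFact (-j).toNat

/-!
Put `X = x ^ 2` and `Y = arcsinh x`, and let `θ = x d/dx`. The `m`-th column of
`(-4) ^ (n - m) * T2 n m / (2 * n)!` has generating function `Y ^ (2 * m) / (2 * m)!`: both satisfy
the recursion in `m` given by `(1 + x ^ 2) f'' + x f'`. Summing the columns with weights
`1 / (2 * m + 1)` gives `E = ∑ 𝔠_{2n} x ^ (2 * n) / (2 * n)! = sinh Y / Y = x / arcsinh x`.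
Since `θ (arcsinh x) = x (1 + x ^ 2) ^ (-1/2)`, the series `E` solves the Riccati equation
`(θ - 1) E = -(1 + x ^ 2) ^ (-1/2) E ^ 2`. Two further shifted derivatives turn this into
`(θ - 3) ((θ - 2) (θ - 1) E + (θ - 3) ^ 2 (x ^ 2 E)) = -6 (1 + x ^ 2) ^ (-1/2) E ^ 4`,
and the theorem compares coefficients after multiplication by `(1 + x ^ 2) ^ (1/2)`, whose
binomial coefficients are the double factorials of the statement.
-/

namespace LevelTwo

open PowerSeries Finset
open scoped Nat

section EulerOperator

variable {R : Type*} [CommRing R]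

/-- The Euler operator `x d/dx` on series in `X = x ^ 2`, so that `X ^ n` has eigenvalue `2 * n`. -/
noncomputable def theta : Derivation R R⟦X⟧ R⟦X⟧ := (2 * X : R⟦X⟧) • d⁄dX R

lemma theta_apply (f : R⟦X⟧) : theta f = 2 * X * d⁄dX R f := rfl

lemma coeff_theta (n : ℕ) (f : R⟦X⟧) : coeff n (theta f) = 2 * n * coeff n f := by
  rw [theta_apply, mul_assoc, ← map_ofNat C 2, coeff_C_mul]
  cases n with
  | zero => simp
  | succ n => rw [coeff_succ_X_mul, coeff_derivative]; push_cast; ring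

lemma theta_X : theta (X : R⟦X⟧) = 2 * X := by
  simp [theta_apply]

lemma theta_mul (f g : R⟦X⟧) : theta (f * g) = f * theta g + g * theta f :=
  theta.leibniz f g

lemma theta_pow (f : R⟦X⟧) (m : ℕ) : theta (f ^ m) = (m : R⟦X⟧) * (f ^ (m - 1) * theta f) := by
  rw [Derivation.leibniz_pow, nsmul_eq_mul, smul_eq_mul]

lemma theta_subst {f g : R⟦X⟧} (hg : HasSubst g) :
    theta (f.subst g) = (d⁄dX R f).subst g * theta g := by
  rw [theta_apply, theta_apply, derivative_subst hg]
  ring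

/-- The shifted Euler operator `θ - c`. -/
noncomputable def thetaSub (c : ℕ) (f : R⟦X⟧) : R⟦X⟧ := theta f - c * f

lemma coeff_thetaSub (c n : ℕ) (f : R⟦X⟧) :
    coeff n (thetaSub c f) = (2 * n - c) * coeff n f := by
  rw [thetaSub, map_sub, coeff_theta, ← map_natCast C, coeff_C_mul]
  ring

lemma thetaSub_add (c : ℕ) (f g : R⟦X⟧) :
    thetaSub c (f + g) = thetaSub c f + thetaSub c g := by
  simp only [thetaSub, map_add]
  ring

lemma thetaSub_X_mul (c : ℕ) (f : R⟦X⟧) : thetaSub (c + 2) (X * f) = X * thetaSub c f := by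
  simp only [thetaSub, theta_mul, theta_X]
  push_cast
  ring

/-- The operator `x ^ 2 * ((1 + x ^ 2) * f'' + x * f')` on series in `X = x ^ 2`, written with
`θ = x d/dx`. In the variable `arcsinh x` it is `x ^ 2` times the second derivative. -/
noncomputable def arcsinhOp (f : R⟦X⟧) : R⟦X⟧ := (1 + X) * theta (theta f) - theta f

lemma arcsinhOp_natCast_mul (c : ℕ) (f : R⟦X⟧) :
    arcsinhOp ((c : R⟦X⟧) * f) = (c : R⟦X⟧) * arcsinhOp f := by
  simp only [arcsinhOp, ← nsmul_eq_mul, map_nsmul, mul_smul_comm, smul_sub]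

lemma coeff_zero_arcsinhOp (f : R⟦X⟧) : coeff 0 (arcsinhOp f) = 0 := by
  simp only [arcsinhOp, add_mul, one_mul, map_sub, map_add, coeff_theta, coeff_zero_X_mul]
  simp

lemma coeff_succ_arcsinhOp (n : ℕ) (f : R⟦X⟧) :
    coeff (n + 1) (arcsinhOp f) =
      (2 * n + 2) * (2 * n + 1) * coeff (n + 1) f + 4 * n ^ 2 * coeff n f := by
  simp only [arcsinhOp, add_mul, one_mul, map_sub, map_add, coeff_theta, coeff_succ_X_mul]
  push_cast
  ring

lemma arcsinhOp_injective_of_constantCoeff [IsDomain R] [CharZero R] {f g : R⟦X⟧}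
    (h : arcsinhOp f = arcsinhOp g) (h0 : constantCoeff f = constantCoeff g) : f = g := by
  ext n
  induction n with
  | zero => simpa using h0
  | succ n ih =>
    have hn := congrArg (coeff (n + 1)) h
    rw [coeff_succ_arcsinhOp, coeff_succ_arcsinhOp, ih, add_left_inj] at hn
    have hne : (2 * n + 2 : R) * (2 * n + 1) ≠ 0 := by
      exact_mod_cast (by positivity : (2 * n + 2) * (2 * n + 1) ≠ 0)
    exact mul_left_cancel₀ hne hn

end EulerOperator

section BinomialSeries

variable {R : Type*} [CommRing R] [BinomialRing R]

lemma succ_mul_choose_succ (r : R) (n : ℕ) :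
    (n + 1) * Ring.choose r (n + 1) = (r - n) * Ring.choose r n := by
  have h := Ring.choose_smul_choose r (Nat.le_add_right n 1)
  rw [Nat.choose_succ_self_right, Nat.add_sub_cancel_left, Ring.choose_one_right, nsmul_eq_mul] at h
  push_cast at h
  linear_combination h

lemma derivative_binomialSeries (r : R) :
    d⁄dX R (binomialSeries R r) = C r * binomialSeries R (r - 1) := by
  ext n
  have h := Ring.choose_smul_choose r (Nat.le_add_left 1 n)
  rw [Nat.choose_one_right, Nat.add_sub_cancel, Ring.choose_one_right, nsmul_eq_mul] at h
  push_cast at h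
  rw [coeff_derivative, coeff_C_mul]
  simp only [binomialSeries_coeff, smul_eq_mul, mul_one]
  linear_combination h

end BinomialSeries

section ArcsinhSeries

/-- The series of `√(1 + x ^ 2)` in `X = x ^ 2`. -/
noncomputable def sqrtSeries : ℚ⟦X⟧ := binomialSeries ℚ (1 / 2 : ℚ)

/-- The series of `1 / √(1 + x ^ 2)` in `X = x ^ 2`. -/
noncomputable def invSqrtSeries : ℚ⟦X⟧ := binomialSeries ℚ (-1 / 2 : ℚ)

/-- The series of `arcsinh x / x` in `X = x ^ 2`, obtained by integrating `1 / √(1 + x ^ 2)`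
term by term. -/
noncomputable def arcsinhDivSeries : ℚ⟦X⟧ := mk fun n => coeff n invSqrtSeries / (2 * n + 1)

/-- The series of `(arcsinh x) ^ 2` in `X = x ^ 2`. -/
noncomputable def arcsinhSqSeries : ℚ⟦X⟧ := X * arcsinhDivSeries ^ 2

lemma sqrtSeries_mul_invSqrtSeries : sqrtSeries * invSqrtSeries = 1 := by
  rw [sqrtSeries, invSqrtSeries, ← binomialSeries_add]
  norm_num

lemma sqrtSeries_sq : sqrtSeries ^ 2 = 1 + X := by
  rw [sqrtSeries, sq, ← binomialSeries_add, add_halves]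
  simpa using binomialSeries_nat (R := ℚ) (A := ℚ) 1

lemma one_add_X_mul_invSqrtSeries_sq : (1 + X) * invSqrtSeries ^ 2 = 1 := by
  rw [← sqrtSeries_sq, ← mul_pow, sqrtSeries_mul_invSqrtSeries, one_pow]

lemma invSqrtSeries_ne_zero : invSqrtSeries ≠ 0 :=
  right_ne_zero_of_mul_eq_one sqrtSeries_mul_invSqrtSeries

lemma theta_sqrtSeries : theta sqrtSeries = X * invSqrtSeries := by
  have two_mul_half : (2 : ℚ⟦X⟧) * C (1 / 2 : ℚ) = 1 := by
    rw [← map_ofNat C 2, ← map_mul]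
    norm_num
  rw [theta_apply, sqrtSeries, derivative_binomialSeries, invSqrtSeries]
  rw [show (1 / 2 - 1 : ℚ) = -1 / 2 by norm_num]
  linear_combination X * binomialSeries ℚ (-1 / 2 : ℚ) * two_mul_half

lemma theta_invSqrtSeries : theta invSqrtSeries = -X * invSqrtSeries ^ 3 := by
  rw [theta.leibniz_of_mul_eq_one ((mul_comm _ _).trans sqrtSeries_mul_invSqrtSeries),
    theta_sqrtSeries, smul_eq_mul]
  ring

lemma theta_arcsinhDivSeries : theta arcsinhDivSeries = invSqrtSeries - arcsinhDivSeries := by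
  ext n
  rw [map_sub, coeff_theta, arcsinhDivSeries, coeff_mk]
  field_simp
  ring

lemma constantCoeff_arcsinhSqSeries : constantCoeff arcsinhSqSeries = 0 := by
  simp [arcsinhSqSeries]

lemma hasSubst_arcsinhSqSeries : HasSubst arcsinhSqSeries :=
  .of_constantCoeff_zero' constantCoeff_arcsinhSqSeries

lemma theta_arcsinhSqSeries :
    theta arcsinhSqSeries = 2 * X * invSqrtSeries * arcsinhDivSeries := by
  simp only [arcsinhSqSeries, sq, theta_mul, theta_X, theta_arcsinhDivSeries]
  ring

lemma one_add_X_mul_theta_arcsinhSqSeries_sq :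
    (1 + X) * theta arcsinhSqSeries ^ 2 = 4 * X * arcsinhSqSeries := by
  rw [theta_arcsinhSqSeries, arcsinhSqSeries]
  linear_combination 4 * X ^ 2 * arcsinhDivSeries ^ 2 * one_add_X_mul_invSqrtSeries_sq

lemma arcsinhOp_arcsinhSqSeries : arcsinhOp arcsinhSqSeries = 2 * X := by
  rw [arcsinhOp, theta_arcsinhSqSeries]
  simp only [two_mul, add_mul, map_add, theta_mul, theta_X, theta_invSqrtSeries,
    theta_arcsinhDivSeries]
  linear_combination
    2 * X * (1 - arcsinhDivSeries * invSqrtSeries * X) * one_add_X_mul_invSqrtSeries_sq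

lemma arcsinhOp_arcsinhSqSeries_pow_succ (m : ℕ) :
    arcsinhOp (arcsinhSqSeries ^ (m + 1)) =
      (2 * (m : ℚ⟦X⟧) + 2) * (2 * (m : ℚ⟦X⟧) + 1) * (X * arcsinhSqSeries ^ m) := by
  have theta_pow_succ : theta (arcsinhSqSeries ^ (m + 1)) =
      ((m + 1 : ℕ) : ℚ⟦X⟧) * (arcsinhSqSeries ^ m * theta arcsinhSqSeries) :=
    theta_pow _ _
  have pow_pred_mul : (m : ℚ⟦X⟧) * (arcsinhSqSeries ^ (m - 1) * arcsinhSqSeries) =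
      (m : ℚ⟦X⟧) * arcsinhSqSeries ^ m := by
    cases m with
    | zero => simp
    | succ m => rw [Nat.add_sub_cancel, pow_succ]
  have hZ := arcsinhOp_arcsinhSqSeries
  rw [arcsinhOp] at hZ ⊢
  rw [theta_pow_succ, theta_mul, Derivation.map_natCast, theta_mul, theta_pow]
  push_cast
  linear_combination (m + 1) * arcsinhSqSeries ^ m * hZ +
    (m + 1) * m * arcsinhSqSeries ^ (m - 1) * one_add_X_mul_theta_arcsinhSqSeries_sq +
    4 * X * (m + 1) * pow_pred_mul

end ArcsinhSeries

section Stirling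

lemma T2_eq_zero_of_lt {n m : ℕ} (h : n < m) : T2 n m = 0 := by
  induction n generalizing m with
  | zero => cases m with
    | zero => omega
    | succ m => rfl
  | succ n ih => cases m with
    | zero => omega
    | succ m => rw [T2, ih (by omega), ih (by omega), mul_zero, zero_add]

lemma sq_mul_T2_zero_right (n : ℕ) : n ^ 2 * T2 n 0 = 0 := by
  cases n with
  | zero => rfl
  | succ n => rw [T2, mul_zero]

lemma pow_mul_T2_succ_succ {R : Type*} [CommSemiring R] (a : R) (n m : ℕ) :
    a ^ (n + 1 - (m + 1)) * T2 (n + 1) (m + 1) =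
      a ^ (n - m) * T2 n m + n ^ 2 * a * (a ^ (n - (m + 1)) * T2 n (m + 1)) := by
  rw [Nat.add_sub_add_right, T2]
  rcases Nat.lt_or_ge n (m + 1) with h | h
  · simp [T2_eq_zero_of_lt h]
  · obtain ⟨k, rfl⟩ := Nat.exists_eq_add_of_le h
    rw [show m + 1 + k - m = k + 1 by omega, Nat.add_sub_cancel_left]
    push_cast
    ring

lemma sum_pow_mul_T2_mul_pow {R : Type*} [CommSemiring R] (a y : R) (n : ℕ) :
    ∑ m ∈ range (n + 1), a ^ (n - m) * T2 n m * y ^ m = ∏ k ∈ range n, (y + k ^ 2 * a) := by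
  induction n with
  | zero => simp [T2]
  | succ n ih =>
    have hshift : (n : R) ^ 2 *
          ∑ m ∈ range (n + 1), a ^ (n - (m + 1)) * T2 n (m + 1) * y ^ (m + 1) =
        n ^ 2 * ∑ m ∈ range (n + 1), a ^ (n - m) * T2 n m * y ^ m := by
      have hzero : (n : R) ^ 2 * (a ^ (n - 0) * T2 n 0 * y ^ 0) = 0 := by
        rw [pow_zero, mul_one, mul_left_comm, ← Nat.cast_pow, ← Nat.cast_mul, sq_mul_T2_zero_right,
          Nat.cast_zero, mul_zero]
      have hsum := sum_range_succ' (fun m => a ^ (n - m) * T2 n m * y ^ m) (n + 1)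
      rw [sum_range_succ, T2_eq_zero_of_lt n.lt_succ_self, Nat.cast_zero, mul_zero, zero_mul,
        add_zero] at hsum
      rw [hsum, mul_add, hzero, add_zero]
    calc ∑ m ∈ range (n + 2), a ^ (n + 1 - m) * T2 (n + 1) m * y ^ m
        = ∑ m ∈ range (n + 1), a ^ (n + 1 - (m + 1)) * T2 (n + 1) (m + 1) * y ^ (m + 1) := by
          rw [sum_range_succ', T2]
          simp only [Nat.cast_zero, mul_zero, zero_mul, add_zero]
      _ = y * ∑ m ∈ range (n + 1), a ^ (n - m) * T2 n m * y ^ m + a * ((n : R) ^ 2 *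
            ∑ m ∈ range (n + 1), a ^ (n - (m + 1)) * T2 n (m + 1) * y ^ (m + 1)) := by
          simp only [mul_sum, ← sum_add_distrib, pow_mul_T2_succ_succ]
          refine sum_congr rfl fun m _ => ?_
          ring
      _ = ∏ k ∈ range (n + 1), (y + k ^ 2 * a) := by
          rw [hshift, ih, prod_range_succ]
          ring

lemma prod_one_sub_four_mul_sq (n : ℕ) :
    ∏ k ∈ range n, (1 + (k : ℚ) ^ 2 * -4) = (2 * n)! * Ring.choose (1 / 2 : ℚ) n := by
  induction n with
  | zero => simp
  | succ n ih =>
    rw [prod_range_succ, ih, Nat.mul_succ, Nat.factorial_succ, Nat.factorial_succ]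
    push_cast
    linear_combination -2 * (2 * n + 1) * ((2 * n)! : ℚ) * succ_mul_choose_succ (1 / 2 : ℚ) n

/-- The `m`-th column `∑ n, (-4) ^ (n - m) * T2 n m * x ^ (2 * n) / (2 * n)!` of the level 2
Stirling numbers, as a series in `X = x ^ 2`. -/
noncomputable def stirlingColumn (m : ℕ) : ℚ⟦X⟧ :=
  mk fun n => (-4) ^ (n - m) * T2 n m / (2 * n)!

lemma stirlingColumn_zero : stirlingColumn 0 = 1 := by
  ext n
  cases n with
  | zero => simp [stirlingColumn, T2]
  | succ n => simp [stirlingColumn, T2, coeff_one]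

lemma constantCoeff_stirlingColumn_succ (m : ℕ) : constantCoeff (stirlingColumn (m + 1)) = 0 := by
  simp [stirlingColumn, T2, ← coeff_zero_eq_constantCoeff_apply]

lemma arcsinhOp_stirlingColumn_succ (m : ℕ) :
    arcsinhOp (stirlingColumn (m + 1)) = X * stirlingColumn m := by
  ext n
  cases n with
  | zero => rw [coeff_zero_arcsinhOp, coeff_zero_X_mul]
  | succ n =>
    rw [coeff_succ_arcsinhOp, coeff_succ_X_mul]
    simp only [stirlingColumn, coeff_mk, pow_mul_T2_succ_succ, Nat.mul_succ, Nat.factorial_succ]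
    push_cast
    field_simp
    ring

lemma arcsinhSqSeries_pow (m : ℕ) :
    arcsinhSqSeries ^ m = ((2 * m)! : ℚ⟦X⟧) * stirlingColumn m := by
  induction m with
  | zero => simpa using stirlingColumn_zero.symm
  | succ m ih =>
    apply arcsinhOp_injective_of_constantCoeff
    · rw [arcsinhOp_arcsinhSqSeries_pow_succ, arcsinhOp_natCast_mul, arcsinhOp_stirlingColumn_succ,
        ih, Nat.mul_succ, Nat.factorial_succ, Nat.factorial_succ]
      push_cast
      ring
    · simp [constantCoeff_arcsinhSqSeries, constantCoeff_stirlingColumn_succ]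

lemma coeff_subst_arcsinhSqSeries (f : ℚ⟦X⟧) (n : ℕ) :
    coeff n (f.subst arcsinhSqSeries) =
      (∑ m ∈ range (n + 1), (2 * m)! * coeff m f * ((-4) ^ (n - m) * T2 n m)) / (2 * n)! := by
  have hcoeff (m : ℕ) : coeff n (arcsinhSqSeries ^ m) =
      (2 * m)! * ((-4) ^ (n - m) * T2 n m / (2 * n)!) := by
    rw [arcsinhSqSeries_pow, ← map_natCast (C (R := ℚ)), coeff_C_mul, stirlingColumn, coeff_mk]
  have hsupp : (Function.support fun m => coeff m f • coeff n (arcsinhSqSeries ^ m)) ⊆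
      range (n + 1) := by
    intro m hm
    by_contra hlt
    refine hm ?_
    simp only [hcoeff, T2_eq_zero_of_lt (show n < m by simpa using hlt), Nat.cast_zero, mul_zero,
      zero_div, smul_zero]
  rw [coeff_subst' hasSubst_arcsinhSqSeries, finsum_eq_sum_of_support_subset _ hsupp, sum_div]
  refine sum_congr rfl fun m _ => ?_
  rw [hcoeff, smul_eq_mul]
  ring

end Stirling

section CauchySeries

/-- The series of `cosh x` in `X = x ^ 2`. -/
noncomputable def coshSeries : ℚ⟦X⟧ := mk fun m => 1 / (2 * m)!

/-- The series of `sinh x / x` in `X = x ^ 2`. -/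
noncomputable def sinhDivSeries : ℚ⟦X⟧ := mk fun m => 1 / (2 * m + 1)!

/-- The exponential generating function `∑ n, 𝔠_{2n} * x ^ (2 * n) / (2 * n)!`, as a series in
`X = x ^ 2`. -/
noncomputable def cauchySeries : ℚ⟦X⟧ := mk fun n => cauchy2 n / (2 * n)!

lemma two_mul_derivative_coshSeries : 2 * d⁄dX ℚ coshSeries = sinhDivSeries := by
  ext n
  rw [← map_ofNat C 2, coeff_C_mul, coeff_derivative, coshSeries, sinhDivSeries, coeff_mk, coeff_mk,
    Nat.mul_succ, Nat.factorial_succ]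
  push_cast
  field_simp
  ring

lemma coshSeries_subst_arcsinhSqSeries : coshSeries.subst arcsinhSqSeries = sqrtSeries := by
  ext n
  have h := (sum_pow_mul_T2_mul_pow (-4 : ℚ) 1 n).trans (prod_one_sub_four_mul_sq n)
  simp only [one_pow, mul_one] at h
  rw [coeff_subst_arcsinhSqSeries, sqrtSeries, binomialSeries_coeff, smul_eq_mul, mul_one,
    div_eq_iff (by positivity), mul_comm, ← h]
  refine sum_congr rfl fun m _ => ?_
  rw [coshSeries, coeff_mk, mul_one_div_cancel (by positivity), one_mul]

lemma sinhDivSeries_subst_arcsinhSqSeries :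
    sinhDivSeries.subst arcsinhSqSeries = cauchySeries := by
  ext n
  rw [coeff_subst_arcsinhSqSeries, cauchySeries, coeff_mk, cauchy2]
  congr 1
  refine sum_congr rfl fun m _ => ?_
  rw [sinhDivSeries, coeff_mk, Nat.factorial_succ]
  push_cast
  field_simp

lemma arcsinhDivSeries_mul_cauchySeries : arcsinhDivSeries * cauchySeries = 1 := by
  have chain_rule : theta sqrtSeries =
      X * invSqrtSeries * (arcsinhDivSeries * cauchySeries) := by
    have two_mul_subst : 2 * (d⁄dX ℚ coshSeries).subst arcsinhSqSeries = cauchySeries := by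
      rw [← sinhDivSeries_subst_arcsinhSqSeries, ← two_mul_derivative_coshSeries, two_mul, two_mul,
        subst_add hasSubst_arcsinhSqSeries]
    rw [← coshSeries_subst_arcsinhSqSeries, theta_subst hasSubst_arcsinhSqSeries,
      theta_arcsinhSqSeries, ← two_mul_subst]
    ring
  apply mul_left_cancel₀ (mul_ne_zero X_ne_zero invSqrtSeries_ne_zero)
  rw [← chain_rule, theta_sqrtSeries, mul_one]

lemma thetaSub_one_cauchySeries :
    thetaSub 1 cauchySeries = -(invSqrtSeries * cauchySeries ^ 2) := by
  have h := theta.leibniz_of_mul_eq_one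
    ((mul_comm _ _).trans arcsinhDivSeries_mul_cauchySeries)
  rw [theta_arcsinhDivSeries, smul_eq_mul] at h
  rw [thetaSub, h, Nat.cast_one]
  linear_combination cauchySeries * arcsinhDivSeries_mul_cauchySeries

lemma theta_cauchySeries :
    theta cauchySeries = cauchySeries - invSqrtSeries * cauchySeries ^ 2 := by
  have h := thetaSub_one_cauchySeries
  rw [thetaSub, Nat.cast_one] at h
  linear_combination h

lemma cauchySeries_cube :
    thetaSub 2 (thetaSub 1 cauchySeries) + thetaSub 3 (thetaSub 3 (X * cauchySeries)) =
      2 * cauchySeries ^ 3 := by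
  rw [thetaSub_X_mul 1, thetaSub_X_mul 1, thetaSub_one_cauchySeries]
  simp only [thetaSub, map_neg, theta_mul, theta_pow, theta_invSqrtSeries, theta_cauchySeries]
  linear_combination (2 * cauchySeries ^ 3 + X * invSqrtSeries * cauchySeries ^ 2) *
    one_add_X_mul_invSqrtSeries_sq

lemma cauchySeries_pow_four :
    thetaSub 3 (thetaSub 2 (thetaSub 1 cauchySeries)) +
        thetaSub 3 (thetaSub 3 (thetaSub 3 (X * cauchySeries))) =
      -6 * (invSqrtSeries * cauchySeries ^ 4) := by
  rw [← thetaSub_add, cauchySeries_cube, two_mul, thetaSub_add, thetaSub, theta_pow,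
    theta_cauchySeries]
  push_cast
  ring

end CauchySeries

section Coefficients

lemma coeff_mk_pow {R : Type*} [CommSemiring R] (a : ℕ → R) (k n : ℕ) :
    coeff n (mk a ^ k) = ∑ x ∈ Nat.antidiagonalTuple k n, ∏ j, a (x j) := by
  rw [← Fin.prod_const, coeff_prod]
  simp only [coeff_mk]
  refine sum_nbij' (⇑) Finsupp.equivFunOnFinite.symm ?_ ?_ ?_ ?_ ?_ <;>
    simp [Nat.mem_antidiagonalTuple]

lemma sum_multinomial_two_mul_mul_prod {K : Type*} [Field K] [CharZero K] (a : ℕ → K) (k n : ℕ) :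
    ∑ x ∈ Nat.antidiagonalTuple k n,
        (Nat.multinomial univ (fun j => 2 * x j) : K) * ∏ j, a (x j) =
      (2 * n)! * coeff n (mk (fun i => a i / (2 * i)!) ^ k) := by
  rw [coeff_mk_pow, mul_sum]
  refine sum_congr rfl fun x hx => ?_
  have hfact : (∏ j, ((2 * x j)! : K)) * Nat.multinomial univ (fun j => 2 * x j) = (2 * n)! := by
    rw [← Nat.mem_antidiagonalTuple.mp hx, mul_sum]
    exact_mod_cast Nat.multinomial_spec univ fun j => 2 * x j
  have hne : (∏ j, ((2 * x j)! : K)) ≠ 0 :=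
    prod_ne_zero_iff.mpr fun j _ => Nat.cast_ne_zero.mpr (Nat.factorial_ne_zero _)
  rw [← hfact, prod_div_distrib]
  field_simp

lemma ddf_natCast_sub_one_succ (k : ℕ) :
    ddf ((k + 1 : ℕ) - 1) = (2 * k - 1) * ddf (k - 1) := by
  cases k with
  | zero => simp [ddf, odFact]
  | succ k =>
    have h (j : ℕ) : ddf ((j + 1 : ℕ) - 1) = odFact j := by simp [ddf]
    rw [h, h, odFact]
    push_cast
    ring

lemma ddf_eq_neg_choose_half (k : ℕ) :
    (-1) ^ k * ddf (k - 1) / (2 ^ k * k !) = -Ring.choose (1 / 2 : ℚ) k := by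
  induction k with
  | zero => simp [ddf, odFact]
  | succ k ih =>
    have hk : (k + 1 : ℚ) ≠ 0 := by positivity
    apply mul_left_cancel₀ hk
    rw [mul_neg, succ_mul_choose_succ, ← mul_neg, ← ih, ddf_natCast_sub_one_succ,
      Nat.factorial_succ]
    push_cast
    field_simp
    ring

lemma coeff_neg_sqrtSeries_mul (f : ℚ⟦X⟧) (n : ℕ) :
    coeff n (-sqrtSeries * f) = ∑ l ∈ range (n + 1),
      (-1) ^ (n - l) * ddf (n - l - 1) / (2 ^ (n - l) * (n - l)!) * coeff l f := by
  rw [mul_comm, coeff_mul, Nat.sum_antidiagonal_eq_sum_range_succ_mk]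
  refine sum_congr rfl fun l hl => ?_
  rw [map_neg, sqrtSeries, binomialSeries_coeff, smul_eq_mul, mul_one, ← ddf_eq_neg_choose_half,
    Nat.cast_sub (mem_range_succ_iff.mp hl), mul_comm]

lemma coeff_cauchySeries (n : ℕ) : coeff n cauchySeries = cauchy2 n / (2 * n)! :=
  coeff_mk _ _

lemma coeff_X_mul_cauchySeries (n : ℕ) :
    coeff n (X * cauchySeries) = 2 * n * (2 * n - 1) * cauchy2 (n - 1) / (2 * n)! := by
  cases n with
  | zero => simp
  | succ n =>
    rw [coeff_succ_X_mul, coeff_cauchySeries, Nat.mul_succ, Nat.factorial_succ, Nat.factorial_succ,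
      Nat.add_sub_cancel]
    push_cast
    field_simp
    ring

lemma six_mul_cauchySeries_pow_four :
    6 * cauchySeries ^ 4 =
      -sqrtSeries * thetaSub 3 (thetaSub 2 (thetaSub 1 cauchySeries)) +
        -sqrtSeries * thetaSub 3 (thetaSub 3 (thetaSub 3 (X * cauchySeries))) := by
  rw [← mul_add, cauchySeries_pow_four]
  linear_combination -6 * cauchySeries ^ 4 * sqrtSeries_mul_invSqrtSeries

lemma coeff_neg_sqrtSeries_mul_thetaSub_cauchySeries (n : ℕ) :
    coeff n (-sqrtSeries * thetaSub 3 (thetaSub 2 (thetaSub 1 cauchySeries))) =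
      ∑ l ∈ range (n + 1), (-1) ^ (n - l) * ddf (n - l - 1) *
        (2 * l - 1) * (2 * l - 2) * (2 * l - 3) / (2 ^ (n - l) * (n - l)! * (2 * l)!) *
        cauchy2 l := by
  rw [coeff_neg_sqrtSeries_mul]
  refine sum_congr rfl fun l _ => ?_
  simp only [coeff_thetaSub, coeff_cauchySeries]
  push_cast
  field_simp

lemma coeff_neg_sqrtSeries_mul_thetaSub_X_mul_cauchySeries (n : ℕ) :
    coeff n (-sqrtSeries * thetaSub 3 (thetaSub 3 (thetaSub 3 (X * cauchySeries)))) =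
      ∑ l ∈ Icc 1 n, (-1) ^ (n - l) * ddf (n - l - 1) *
        (2 * l) * (2 * l - 1) * (2 * l - 3) ^ 3 / (2 ^ (n - l) * (n - l)! * (2 * l)!) *
        cauchy2 (l - 1) := by
  rw [coeff_neg_sqrtSeries_mul, range_eq_Ico, sum_eq_sum_Ico_succ_bot n.succ_pos, zero_add,
    ← Ico_succ_right_eq_Icc]
  simp only [coeff_thetaSub, coeff_X_mul_cauchySeries, Nat.cast_zero, mul_zero, zero_mul, zero_div,
    zero_add]
  refine sum_congr rfl fun l _ => ?_
  push_cast
  field_simp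

end Coefficients

end LevelTwo

theorem statement6 (n : ℕ) (hn : 1 ≤ n) :
    ∑ x ∈ Finset.Nat.antidiagonalTuple 4 n,
        (Nat.multinomial Finset.univ (fun j => 2 * x j) : ℚ) * ∏ j, cauchy2 (x j) =
    (Nat.factorial (2 * n) : ℚ) / 6 * ∑ l ∈ Finset.range (n + 1),
        (-1 : ℚ) ^ (n - l) * ddf ((n : ℤ) - l - 1) *
          (2 * (l : ℚ) - 1) * (2 * (l : ℚ) - 2) * (2 * (l : ℚ) - 3) /
          ((2 : ℚ) ^ (n - l) * (Nat.factorial (n - l) : ℚ) * (Nat.factorial (2 * l) : ℚ)) *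
          cauchy2 l
    + (Nat.factorial (2 * n) : ℚ) / 6 * ∑ l ∈ Finset.Icc 1 n,
        (-1 : ℚ) ^ (n - l) * ddf ((n : ℤ) - l - 1) *
          (2 * (l : ℚ)) * (2 * (l : ℚ) - 1) * (2 * (l : ℚ) - 3) ^ 3 /
          ((2 : ℚ) ^ (n - l) * (Nat.factorial (n - l) : ℚ) * (Nat.factorial (2 * l) : ℚ)) *
          cauchy2 (l - 1) := by
  have four_fold := congrArg (PowerSeries.coeff n) LevelTwo.six_mul_cauchySeries_pow_four
  rw [map_add, LevelTwo.coeff_neg_sqrtSeries_mul_thetaSub_cauchySeries,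
    LevelTwo.coeff_neg_sqrtSeries_mul_thetaSub_X_mul_cauchySeries, ← map_ofNat PowerSeries.C 6,
    PowerSeries.coeff_C_mul] at four_fold
  rw [LevelTwo.sum_multinomial_two_mul_mul_prod, ← LevelTwo.cauchySeries]
  linear_combination (Nat.factorial (2 * n) : ℚ) / 6 * four_fold
end

section
/- For every integer n ≥ 3, the seven-fold convolution ∑_{i₁+⋯+i₇=n, iⱼ≥0} (2n)!/((2i₁)!⋯(2i₇)!) · 𝔠_{2i₁}⋯𝔠_{2i₇} = binom(2n-1, 6) · 𝔠_{2n} + (12n²-60n+83)/15 · binom(2n, 2) binom(2n-3, 4) · 𝔠_{2n-2} + (4n²-24n+39)(12n²-72n+109)/15 · binom(2n, 4) binom(2n-5, 2) · 𝔠_{2n-4} + binom(2n, 6)(2n-7)⁶ · 𝔠_{2n-6}. -/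
/-! The level 2 Cauchy numbers have the generating function
`x / arsinh x = ∑ 𝔠_{2n} x^{2n} / (2n)!`, so an `r`-fold convolution is a coefficient of its `r`-th
power. All series involved are even in `x`, so we work in the variable `X = x²`.

The relation `(1 + x²) (u')² = 1` for `u = arsinh x` yields two second order differential equations.
The one for the powers of `u²` is, on coefficients, the recurrence of the level 2 Stirling numbers;
substituting `u² = (arsinh x)²` into `sinh u / u = ∑ u^{2m} / (2m + 1)!` then gives the generating
function. The one for the powers of `G = x / arsinh x`, with `D = r - x · d/dx`, reads
`r (r + 1) G^{r+2} = (1 + x²) D² G^r + D G^r`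
and expresses the `(r + 2)`-fold convolution through the `r`-fold one; three applications starting
from `r = 1` reach the sevenfold convolution. -/

open PowerSeries
open scoped Nat

theorem cast_factorial_two_mul_succ {R : Type*} [CommSemiring R] (n : ℕ) :
    ((2 * (n + 1))! : R) = 2 * (n + 1) * (2 * n + 1) * (2 * n)! := by
  rw [mul_add_one, Nat.factorial_succ, Nat.factorial_succ]
  push_cast
  ring

theorem cast_choose_eq_prod_range_div {K : Type*} [Field K] [CharZero K] (n k : ℕ) :
    (n.choose k : K) = (∏ i ∈ Finset.range k, ((n : K) - i)) / k ! := by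
  rw [Nat.cast_choose_eq_descPochhammer_div, descPochhammer_eval_eq_prod_range]

theorem coeff_pow_eq_sum_antidiagonalTuple {R : Type*} [CommSemiring R] (f : R⟦X⟧) (r n : ℕ) :
    coeff n (f ^ r) = ∑ x ∈ Finset.Nat.antidiagonalTuple r n, ∏ j, coeff (x j) f := by
  have h := coeff_prod (fun _ : Fin r => f) n Finset.univ
  rw [Finset.prod_const, Finset.card_univ, Fintype.card_fin] at h
  rw [h]
  refine Finset.sum_equiv Finsupp.equivFunOnFinite (fun l => ?_) (fun l _ => rfl)
  simp [Finset.Nat.mem_antidiagonalTuple]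

theorem sum_multinomial_mul_prod {K : Type*} [Field K] [CharZero K] (a : ℕ → K) (d r n : ℕ) :
    ∑ x ∈ Finset.Nat.antidiagonalTuple r n,
        (Nat.multinomial Finset.univ (fun j => d * x j) : K) * ∏ j, a (x j) =
      (d * n)! * coeff n (mk (fun i => a i / (d * i)!) ^ r) := by
  rw [coeff_pow_eq_sum_antidiagonalTuple, Finset.mul_sum]
  refine Finset.sum_congr rfl fun x hx => ?_
  rw [Finset.Nat.mem_antidiagonalTuple] at hx
  have hspec := Nat.multinomial_spec Finset.univ (fun j => d * x j)
  rw [← Finset.mul_sum, hx] at hspec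
  have hne : ∏ j, ((d * x j)! : K) ≠ 0 := Finset.prod_ne_zero_iff.2 fun j _ =>
    Nat.cast_ne_zero.2 (Nat.factorial_ne_zero _)
  simp only [← hspec, coeff_mk, Finset.prod_div_distrib, Nat.cast_mul, Nat.cast_prod]
  field_simp

section Euler

/-- The Euler operator `X · d/dX` on formal power series; it multiplies the `n`-th coefficient
by `n`. -/
noncomputable def eulerOp (R : Type*) [CommRing R] : Derivation R R⟦X⟧ R⟦X⟧ :=
  (X : R⟦X⟧) • d⁄dX R

variable {R : Type*} [CommRing R]

theorem eulerOp_apply (f : R⟦X⟧) : eulerOp R f = X * d⁄dX R f := rfl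

theorem eulerOp_X : eulerOp R X = X := by simp [eulerOp_apply]

theorem coeff_eulerOp (f : R⟦X⟧) (n : ℕ) : coeff n (eulerOp R f) = n * coeff n f := by
  cases n with
  | zero => simp [eulerOp_apply]
  | succ n => rw [eulerOp_apply, coeff_succ_X_mul, coeff_derivative]; push_cast; ring

theorem coeff_natCast_mul (a : ℕ) (f : R⟦X⟧) (n : ℕ) :
    coeff n ((a : R⟦X⟧) * f) = a * coeff n f := by
  rw [← nsmul_eq_mul, map_nsmul, nsmul_eq_mul]

theorem coeff_ofNat_mul (a : ℕ) [a.AtLeastTwo] (f : R⟦X⟧) (n : ℕ) :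
    coeff n ((ofNat(a) : R⟦X⟧) * f) = ofNat(a) * coeff n f :=
  coeff_natCast_mul a f n

theorem coeff_succ_one_add_X_mul (f : R⟦X⟧) (n : ℕ) :
    coeff (n + 1) ((1 + X) * f) = coeff (n + 1) f + coeff n f := by
  rw [add_mul, one_mul, map_add, coeff_succ_X_mul]

variable {v g q : R⟦X⟧}

theorem eulerOp_eq_of_mul_sq_eq_X (hX : v * g ^ 2 = X) :
    eulerOp R v = g * d⁄dX R v * v * g := by
  rw [eulerOp_apply]
  linear_combination -d⁄dX R v * hX

theorem two_mul_eulerOp_eq_of_mul_sq_eq_X (hX : v * g ^ 2 = X) (hv : eulerOp R v = q * v * g) :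
    2 * eulerOp R g = g - q * g ^ 2 := by
  have h := congrArg (eulerOp R) hX
  simp only [Derivation.leibniz, Derivation.leibniz_pow, eulerOp_X, hv, smul_eq_mul,
    nsmul_eq_mul] at h
  refine X_mul_cancel ?_
  linear_combination g * h - (2 * eulerOp R g - g + q * g ^ 2) * hX - g * hX

theorem two_mul_one_add_X_mul_eulerOp (hq : (1 + X) * q ^ 2 = 1) :
    2 * (1 + X) * eulerOp R q = -(X * q) := by
  have h := congrArg (eulerOp R) hq
  simp only [Derivation.leibniz, Derivation.leibniz_pow, map_add, eulerOp_X,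
    Derivation.map_one_eq_zero, smul_eq_mul, nsmul_eq_mul] at h
  linear_combination (1 + X) * q * h - (X * q + 2 * (1 + X) * eulerOp R q) * hq

theorem two_mul_eulerOp_pow (hg : 2 * eulerOp R g = g - q * g ^ 2) (r : ℕ) :
    2 * eulerOp R (g ^ r) = r * (g ^ r - q * g ^ (r + 1)) := by
  induction r with
  | zero => simp
  | succ r ih =>
    rw [pow_succ, Derivation.leibniz, smul_eq_mul, smul_eq_mul]
    push_cast
    linear_combination g * ih + g ^ r * hg

/-- The operator `r - 2θ`, where `θ` is the Euler operator. In the variable `x` with `X = x ^ 2`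
it is `f ↦ -x ^ (r + 1) · d/dx (f / x ^ r)`. -/
noncomputable def eulerShift (r : ℕ) (f : R⟦X⟧) : R⟦X⟧ := r * f - 2 * eulerOp R f

theorem coeff_eulerShift (r : ℕ) (f : R⟦X⟧) (n : ℕ) :
    coeff n (eulerShift r f) = (r - 2 * n) * coeff n f := by
  rw [eulerShift, map_sub, coeff_natCast_mul, coeff_ofNat_mul, coeff_eulerOp]
  ring

theorem eulerShift_pow (hg : 2 * eulerOp R g = g - q * g ^ 2) (r : ℕ) :
    eulerShift r (g ^ r) = r * (q * g ^ (r + 1)) := by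
  rw [eulerShift, two_mul_eulerOp_pow hg]
  ring

theorem mul_pow_add_two_eq (hq : (1 + X) * q ^ 2 = 1) (hg : 2 * eulerOp R g = g - q * g ^ 2)
    (r : ℕ) :
    (r * (r + 1) : R⟦X⟧) * g ^ (r + 2) =
      (1 + X) * eulerShift r (eulerShift r (g ^ r)) + eulerShift r (g ^ r) := by
  have hθg := two_mul_eulerOp_pow hg (r + 1)
  rw [eulerShift_pow hg, eulerShift]
  simp only [Derivation.leibniz, Derivation.map_natCast, smul_eq_mul]
  push_cast at hθg
  linear_combination r * g ^ (r + 1) * two_mul_one_add_X_mul_eulerOp hq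
    + (1 + X) * r * q * hθg - r * (r + 1) * g ^ (r + 2) * hq

theorem coeff_pow_add_two (hq : (1 + X) * q ^ 2 = 1) (hg : 2 * eulerOp R g = g - q * g ^ 2)
    (r n : ℕ) :
    (r * (r + 1) : R) * coeff (n + 1) (g ^ (r + 2)) =
      (2 * n + 2 - r) * (2 * n + 1 - r) * coeff (n + 1) (g ^ r)
        + (2 * n - r) ^ 2 * coeff n (g ^ r) := by
  have h := congrArg (coeff (n + 1)) (mul_pow_add_two_eq hq hg r)
  rw [map_add, coeff_succ_one_add_X_mul] at h
  simp only [coeff_eulerShift] at h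
  norm_cast at h
  rw [coeff_natCast_mul] at h
  push_cast at h
  linear_combination h

theorem eulerOp_eulerOp_pow_succ (hX : v * g ^ 2 = X) (hq : (1 + X) * q ^ 2 = 1)
    (hv : eulerOp R v = q * v * g) (m : ℕ) :
    4 * (1 + X) * eulerOp R (eulerOp R (v ^ (m + 1))) - 2 * eulerOp R (v ^ (m + 1)) =
      ((2 * m + 2) * (2 * m + 1) : R⟦X⟧) * (X * v ^ m) := by
  have hg := two_mul_eulerOp_eq_of_mul_sq_eq_X hX hv
  have hθq := two_mul_one_add_X_mul_eulerOp hq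
  have hθ : eulerOp R (v ^ (m + 1)) = (m + 1) * (q * g * v ^ (m + 1)) := by
    rw [Derivation.leibniz_pow, hv]
    simp only [smul_eq_mul, nsmul_eq_mul, Nat.add_sub_cancel]
    push_cast
    ring
  have hθθ : eulerOp R (eulerOp R (v ^ (m + 1))) =
      (m + 1) * v ^ (m + 1) *
        (eulerOp R q * g + q * eulerOp R g + (m + 1) * (q * g) ^ 2) := by
    rw [hθ, ← Nat.cast_succ, Derivation.leibniz, Derivation.leibniz _ (q * g), hθ]
    simp only [Derivation.leibniz, Derivation.map_natCast, smul_eq_mul]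
    push_cast
    ring
  rw [hθθ, hθ]
  linear_combination (m + 1) * v ^ (m + 1) * (2 * g * hθq + 2 * (1 + X) * q * hg
    + (4 * m + 2) * g ^ 2 * hq) + (m + 1) * (4 * m + 2) * v ^ m * hX

theorem coeff_pow_succ (hX : v * g ^ 2 = X) (hq : (1 + X) * q ^ 2 = 1)
    (hv : eulerOp R v = q * v * g) (m n : ℕ) :
    (2 * n + 2) * (2 * n + 1) * coeff (n + 1) (v ^ (m + 1)) =
      (2 * m + 2) * (2 * m + 1) * coeff n (v ^ m) - 4 * n ^ 2 * coeff n (v ^ (m + 1)) := by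
  have h := congrArg (coeff (n + 1)) (eulerOp_eulerOp_pow_succ hX hq hv m)
  norm_cast at h
  rw [mul_assoc, map_sub, coeff_ofNat_mul, coeff_ofNat_mul, coeff_natCast_mul,
    coeff_succ_X_mul, coeff_succ_one_add_X_mul] at h
  simp only [coeff_eulerOp] at h
  push_cast at h
  linear_combination h

end Euler

section Subst

theorem coeff_subst_eq_sum_range {R : Type*} [CommRing R] {u : R⟦X⟧} (hu : constantCoeff u = 0)
    (f : R⟦X⟧) (n : ℕ) :
    coeff n (f.subst u) = ∑ d ∈ Finset.range (n + 1), coeff d f * coeff n (u ^ d) := by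
  rw [coeff_subst' (HasSubst.of_constantCoeff_zero' hu), finsum_eq_sum_of_support_subset]
  · rfl
  · intro d hd
    by_contra hnd
    have hlt : n < d := by simpa using hnd
    have hdvd : X ^ d ∣ u ^ d := pow_dvd_pow_of_dvd (X_dvd_iff.2 hu) d
    exact hd (by simp [X_pow_dvd_iff.1 hdvd n hlt])

variable (K : Type*) [Field K]

/-- The power series of `sinh √X / √X`. -/
noncomputable def sinhSqrtDiv : K⟦X⟧ := mk fun m => ((2 * m + 1)! : K)⁻¹

/-- The power series of `cosh √X`. -/
noncomputable def coshSqrt : K⟦X⟧ := mk fun m => ((2 * m)! : K)⁻¹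

theorem constantCoeff_sinhSqrtDiv : constantCoeff (sinhSqrtDiv K) = 1 := by
  simp [sinhSqrtDiv]

variable [CharZero K]

theorem two_mul_derivative_coshSqrt : 2 * d⁄dX K (coshSqrt K) = sinhSqrtDiv K := by
  ext m
  have hm : (m + 1 : K) ≠ 0 := Nat.cast_add_one_ne_zero m
  rw [coeff_ofNat_mul, coeff_derivative, coshSqrt, sinhSqrtDiv, coeff_mk, coeff_mk,
    cast_factorial_two_mul_succ, Nat.factorial_succ]
  push_cast
  field_simp

theorem two_mul_eulerOp_sinhSqrtDiv :
    2 * eulerOp K (sinhSqrtDiv K) = coshSqrt K - sinhSqrtDiv K := by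
  ext m
  have hm : (2 * m + 1 : K) ≠ 0 := by exact_mod_cast (2 * m).succ_ne_zero
  rw [coeff_ofNat_mul, coeff_eulerOp, map_sub, coshSqrt, sinhSqrtDiv, coeff_mk, coeff_mk,
    Nat.factorial_succ]
  push_cast
  field_simp
  ring

theorem coshSqrt_sq : coshSqrt K ^ 2 = 1 + X * sinhSqrtDiv K ^ 2 := by
  have hC := two_mul_derivative_coshSqrt K
  have hS := two_mul_eulerOp_sinhSqrtDiv K
  rw [eulerOp_apply] at hS
  apply derivative.ext
  · simp only [Derivation.leibniz, Derivation.leibniz_pow, map_add, derivative_X,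
      Derivation.map_one_eq_zero, smul_eq_mul, nsmul_eq_mul]
    linear_combination coshSqrt K * hC - sinhSqrtDiv K * hS
  · simp [coshSqrt, sinhSqrtDiv]

/-- The power series of `(arsinh √X)²`, which is inverse under substitution to that of
`(sinh √X)² = X · (sinh √X / √X)²`. -/
noncomputable def arsinhSqrtSq : K⟦X⟧ :=
  (X * sinhSqrtDiv K ^ 2).substInvOfIsUnit <| by
    rw [← zero_add 1, coeff_succ_X_mul]
    simp [constantCoeff_sinhSqrtDiv]

/-- The power series of `√X / arsinh √X`, in the form `sinh u / u` for `u = arsinh √X`. -/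
noncomputable def sqrtDivArsinh : K⟦X⟧ := (sinhSqrtDiv K).subst (arsinhSqrtSq K)

theorem constantCoeff_arsinhSqrtSq : constantCoeff (arsinhSqrtSq K) = 0 :=
  constantCoeff_substInvOfIsUnit _ _

theorem hasSubst_arsinhSqrtSq : HasSubst (arsinhSqrtSq K) :=
  HasSubst.substInvOfIsUnit _ _

theorem arsinhSqrtSq_mul_sqrtDivArsinh_sq :
    arsinhSqrtSq K * sqrtDivArsinh K ^ 2 = X := by
  have h := hasSubst_arsinhSqrtSq K
  have hinv : (X * sinhSqrtDiv K ^ 2).subst (arsinhSqrtSq K) = X :=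
    subst_substInvOfIsUnit_right _ (by simp) _
  rwa [subst_mul h, subst_X h, subst_pow h] at hinv

theorem coshSqrt_subst_arsinhSqrtSq_sq :
    (coshSqrt K).subst (arsinhSqrtSq K) ^ 2 = 1 + X := by
  have h := hasSubst_arsinhSqrtSq K
  rw [← subst_pow h, coshSqrt_sq, ← coe_substAlgHom h]
  simp only [map_add, map_one, map_mul, map_pow, coe_substAlgHom h, subst_X h]
  rw [← arsinhSqrtSq_mul_sqrtDivArsinh_sq, sqrtDivArsinh]

theorem coshSqrt_subst_mul_derivative :
    (coshSqrt K).subst (arsinhSqrtSq K) * (sqrtDivArsinh K * d⁄dX K (arsinhSqrtSq K)) = 1 := by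
  have h := hasSubst_arsinhSqrtSq K
  have hd := congrArg (d⁄dX K) (coshSqrt_subst_arsinhSqrtSq_sq K)
  simp only [Derivation.leibniz_pow, derivative_subst h, map_add, derivative_X,
    Derivation.map_one_eq_zero, smul_eq_mul, nsmul_eq_mul] at hd
  have hS : sqrtDivArsinh K = 2 * (d⁄dX K (coshSqrt K)).subst (arsinhSqrtSq K) := by
    rw [sqrtDivArsinh, ← two_mul_derivative_coshSqrt, two_mul, subst_add h, two_mul]
  rw [hS]
  linear_combination hd

theorem one_add_X_mul_sqrtDivArsinh_mul_derivative_sq :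
    (1 + X) * (sqrtDivArsinh K * d⁄dX K (arsinhSqrtSq K)) ^ 2 = 1 := by
  rw [← coshSqrt_subst_arsinhSqrtSq_sq, ← mul_pow, coshSqrt_subst_mul_derivative, one_pow]

theorem coeff_sqrtDivArsinh_pow_add_two (r n : ℕ) :
    (r * (r + 1) : K) * coeff (n + 1) (sqrtDivArsinh K ^ (r + 2)) =
      (2 * n + 2 - r) * (2 * n + 1 - r) * coeff (n + 1) (sqrtDivArsinh K ^ r)
        + (2 * n - r) ^ 2 * coeff n (sqrtDivArsinh K ^ r) :=
  have hX := arsinhSqrtSq_mul_sqrtDivArsinh_sq K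
  coeff_pow_add_two (one_add_X_mul_sqrtDivArsinh_mul_derivative_sq K)
    (two_mul_eulerOp_eq_of_mul_sq_eq_X hX (eulerOp_eq_of_mul_sq_eq_X hX)) r n

theorem coeff_arsinhSqrtSq_pow_succ (m n : ℕ) :
    (2 * n + 2) * (2 * n + 1) * coeff (n + 1) (arsinhSqrtSq K ^ (m + 1)) =
      (2 * m + 2) * (2 * m + 1) * coeff n (arsinhSqrtSq K ^ m)
        - 4 * n ^ 2 * coeff n (arsinhSqrtSq K ^ (m + 1)) :=
  have hX := arsinhSqrtSq_mul_sqrtDivArsinh_sq K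
  coeff_pow_succ hX (one_add_X_mul_sqrtDivArsinh_mul_derivative_sq K)
    (eulerOp_eq_of_mul_sq_eq_X hX) m n

theorem coeff_arsinhSqrtSq_pow (m n : ℕ) :
    coeff n (arsinhSqrtSq K ^ m) =
      (2 * m)! / (2 * n)! * ((-4) ^ n / (-4) ^ m * T2 n m) := by
  induction n generalizing m with
  | zero => cases m <;> simp [T2, constantCoeff_arsinhSqrtSq]
  | succ n ih =>
    cases m with
    | zero => simp [coeff_one, T2]
    | succ m =>
      have hn : (n + 1 : K) ≠ 0 := Nat.cast_add_one_ne_zero n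
      have hn' : (2 * n + 1 : K) ≠ 0 := by exact_mod_cast (2 * n).succ_ne_zero
      have hfact : ((2 * n)! : K) ≠ 0 := Nat.cast_ne_zero.2 (Nat.factorial_ne_zero _)
      have hrec := coeff_arsinhSqrtSq_pow_succ K m n
      rw [ih, ih, cast_factorial_two_mul_succ, pow_succ (-4 : K)] at hrec
      rw [T2, cast_factorial_two_mul_succ, cast_factorial_two_mul_succ, pow_succ (-4 : K),
        pow_succ (-4 : K)]
      push_cast
      field_simp at hrec ⊢
      linear_combination hrec

end Subst

theorem sqrtDivArsinh_eq_mk_cauchy2 :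
    sqrtDivArsinh ℚ = mk fun n => cauchy2 n / (2 * n)! := by
  ext n
  rw [sqrtDivArsinh, coeff_subst_eq_sum_range (constantCoeff_arsinhSqrtSq ℚ), coeff_mk, cauchy2,
    Finset.sum_div]
  refine Finset.sum_congr rfl fun m hm => ?_
  have hmn : m ≤ n := Nat.lt_succ_iff.1 (Finset.mem_range.1 hm)
  rw [coeff_arsinhSqrtSq_pow, sinhSqrtDiv, coeff_mk, Nat.factorial_succ,
    pow_sub₀ (-4 : ℚ) (by norm_num) hmn]
  push_cast
  field_simp

/-- The `r`-fold convolution `∑ (2n)! / ((2i₁)! ⋯ (2iᵣ)!) · 𝔠_{2i₁} ⋯ 𝔠_{2iᵣ}` over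
`i₁ + ⋯ + iᵣ = n` of the Cauchy numbers with level 2. -/
def cauchyConvolution (r n : ℕ) : ℚ :=
  ∑ x ∈ Finset.Nat.antidiagonalTuple r n,
    (Nat.multinomial Finset.univ (fun j => 2 * x j) : ℚ) * ∏ j, cauchy2 (x j)

theorem cauchyConvolution_eq_coeff (r n : ℕ) :
    cauchyConvolution r n = (2 * n)! * coeff n (sqrtDivArsinh ℚ ^ r) := by
  rw [cauchyConvolution, sum_multinomial_mul_prod, sqrtDivArsinh_eq_mk_cauchy2]

theorem cauchyConvolution_one (n : ℕ) : cauchyConvolution 1 n = cauchy2 n := by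
  simp [cauchyConvolution]

theorem cauchyConvolution_add_two (r n : ℕ) :
    r * (r + 1) * cauchyConvolution (r + 2) (n + 1) =
      (2 * n + 2 - r) * (2 * n + 1 - r) * cauchyConvolution r (n + 1)
        + (2 * n + 2) * (2 * n + 1) * (2 * n - r) ^ 2 * cauchyConvolution r n := by
  simp only [cauchyConvolution_eq_coeff, cast_factorial_two_mul_succ]
  linear_combination (2 * n + 2) * (2 * n + 1) * (2 * n)! * coeff_sqrtDivArsinh_pow_add_two ℚ r n

theorem cauchyConvolution_three (n : ℕ) :
    cauchyConvolution 3 (n + 1) =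
      (2 * n + 1).choose 2 * cauchy2 (n + 1)
        + (2 * n + 2).choose 2 * (2 * n - 1) ^ 2 * cauchy2 n := by
  have h := cauchyConvolution_add_two 1 n
  simp only [cauchyConvolution_one] at h
  rw [Nat.cast_choose_two, Nat.cast_choose_two]
  push_cast at h ⊢
  linear_combination h / 2

theorem cauchyConvolution_five (n : ℕ) :
    cauchyConvolution 5 (n + 2) =
      (2 * n + 3).choose 4 * cauchy2 (n + 2)
        + (4 * n ^ 2 + 1) / 3 * (2 * n + 4).choose 2 * (2 * n + 1).choose 2 * cauchy2 (n + 1)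
        + (2 * n + 4).choose 4 * (2 * n - 1) ^ 4 * cauchy2 n := by
  have h := cauchyConvolution_add_two 3 (n + 1)
  rw [cauchyConvolution_three, cauchyConvolution_three] at h
  simp only [cast_choose_eq_prod_range_div, Finset.prod_range_succ, Finset.prod_range_zero,
    Nat.factorial] at h ⊢
  push_cast at h ⊢
  linear_combination h / 12

theorem statement8 (n : ℕ) (hn : 3 ≤ n) :
    ∑ x ∈ Finset.Nat.antidiagonalTuple 7 n,
        (Nat.multinomial Finset.univ (fun j => 2 * x j) : ℚ) * ∏ j, cauchy2 (x j) =
    (Nat.choose (2 * n - 1) 6 : ℚ) * cauchy2 n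
    + (12 * (n : ℚ) ^ 2 - 60 * (n : ℚ) + 83) / 15 *
        (Nat.choose (2 * n) 2 : ℚ) * (Nat.choose (2 * n - 3) 4 : ℚ) * cauchy2 (n - 1)
    + (4 * (n : ℚ) ^ 2 - 24 * (n : ℚ) + 39) * (12 * (n : ℚ) ^ 2 - 72 * (n : ℚ) + 109) / 15 *
        (Nat.choose (2 * n) 4 : ℚ) * (Nat.choose (2 * n - 5) 2 : ℚ) * cauchy2 (n - 2)
    + (Nat.choose (2 * n) 6 : ℚ) * (2 * (n : ℚ) - 7) ^ 6 * cauchy2 (n - 3) := by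
  obtain ⟨m, rfl⟩ := Nat.exists_eq_add_of_le' hn
  change cauchyConvolution 7 (m + 3) = _
  have hrec := cauchyConvolution_add_two 5 (m + 2)
  rw [cauchyConvolution_five, cauchyConvolution_five] at hrec
  rw [show m + 3 - 1 = m + 2 by omega, show m + 3 - 2 = m + 1 by omega, show m + 3 - 3 = m by omega,
    show 2 * (m + 3) - 1 = 2 * m + 5 by omega, show 2 * (m + 3) - 3 = 2 * m + 3 by omega,
    show 2 * (m + 3) - 5 = 2 * m + 1 by omega]
  simp only [cast_choose_eq_prod_range_div, Finset.prod_range_succ, Finset.prod_range_zero,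
    Nat.factorial] at hrec ⊢
  push_cast at hrec ⊢
  linear_combination hrec / 30
end

section
/- For all integers n ≥ 1 and 1 ≤ m ≤ n, the Stirling numbers of the first kind with level 2 are given in terms of the unsigned Stirling numbers of the first kind by T(n,m) = [n,m]² + 2·∑_{j=1}^{m-1} (-1)^j [n, m-j][n, m+j], i.e. T(n,m) = [n,m]² − 2[n,m-1][n,m+1] + 2[n,m-2][n,m+2] − ⋯ + 2(-1)^{m-1}[n,1][n,2m-1], where [n,k] denotes the unsigned Stirling number of the first kind (with [n,k]=0 for k>n). -/
/-- Unsigned Stirling numbers of the first kind: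
`stirling1 n k = [n, k]`, with `[0,0] = 1` and
`[n, k] = [n-1, k-1] + (n-1)·[n-1, k]`. -/
def stirling1 : ℕ → ℕ → ℕ
  | 0, 0 => 1
  | 0, _ + 1 => 0
  | _ + 1, 0 => 0
  | n + 1, k + 1 => stirling1 n k + n * stirling1 n (k + 1)

/-!
The numbers `[n, k]` are the coefficients of `P = ∏ i < n, (X + i)`, and the numbers `T(n, k)`
those of `Q = ∏ i < n, (X + i²)`. Since `(i + X) (i - X) = i² - X²`, we have `P(X) P(-X) = Q(-X²)`.
The coefficient of `X ^ (2 * m)` on the right is `(-1)ᵐ T(n, m)`; on the left it is an alternating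
convolution of the `[n, k]` that is symmetric about its middle term, and folding it there gives the
formula.
-/

section SumAntidiagonal

open Finset

theorem sum_antidiagonal_two_mul {M : Type*} [AddCommMonoid M] (f : ℕ × ℕ → M) (m : ℕ) :
    ∑ p ∈ antidiagonal (2 * m), f p =
      f (m, m) + ∑ j ∈ Icc 1 m, (f (m - j, m + j) + f (m + j, m - j)) := by
  induction m generalizing f with
  | zero => simp
  | succ m ih =>
    have shift : ∑ j ∈ Icc 1 m, (f (m - j + 1, m + j + 1) + f (m + j + 1, m - j + 1)) =
        ∑ j ∈ Icc 1 m, (f (m + 1 - j, m + 1 + j) + f (m + 1 + j, m + 1 - j)) := by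
      refine sum_congr rfl fun j hj => ?_
      rw [← Nat.sub_add_comm (mem_Icc.1 hj).2, Nat.add_right_comm m j 1]
    rw [show 2 * (m + 1) = 2 * m + 1 + 1 by ring, Nat.sum_antidiagonal_succ,
      Nat.sum_antidiagonal_succ', ih (fun p => f (p.1 + 1, p.2 + 1)), shift,
      sum_Icc_succ_top (by lia), Nat.sub_self,
      show m + 1 + (m + 1) = 2 * m + 1 + 1 by ring]
    abel

end SumAntidiagonal

section PolynomialCoefficients

open Finset Polynomial

theorem comp_neg_X_coeff {R : Type*} [Ring R] (p : R[X]) (k : ℕ) :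
    (p.comp (-X)).coeff k = p.coeff k * (-1) ^ k := by
  rw [show (-X : R[X]) = C (-1) * X by simp, comp_C_mul_X_coeff]

theorem coeff_two_mul_mul_comp_neg_X {R : Type*} [CommRing R] (p : R[X]) (m : ℕ) :
    (p * p.comp (-X)).coeff (2 * m) = (-1) ^ m * (p.coeff m ^ 2 +
      2 * ∑ j ∈ Icc 1 m, (-1) ^ j * p.coeff (m - j) * p.coeff (m + j)) := by
  simp only [coeff_mul, comp_neg_X_coeff, sum_antidiagonal_two_mul, mul_add, mul_sum]
  congr 1
  · ring
  · refine sum_congr rfl fun j hj => ?_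
    have sign_add : (-1 : R) ^ (m + j) = (-1) ^ m * (-1) ^ j := pow_add _ _ _
    have sign_sub : (-1 : R) ^ (m - j) = (-1) ^ m * (-1) ^ j := by
      have same_parity : Even (m - j) ↔ Even (m + j) := by
        rw [Nat.even_sub (mem_Icc.1 hj).2, Nat.even_add]
      rw [← pow_add, neg_one_pow_congr same_parity]
    rw [sign_add, sign_sub]
    ring

theorem prod_X_add_C_mul_comp_neg_X {R ι : Type*} [CommRing R] (s : Finset ι) (a : ι → R) :
    (∏ i ∈ s, (X + C (a i))) * (∏ i ∈ s, (X + C (a i))).comp (-X) =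
      expand R 2 ((∏ i ∈ s, (X + C (a i ^ 2))).comp (-X)) := by
  simp only [Polynomial.prod_comp, map_prod, ← prod_mul_distrib]
  refine prod_congr rfl fun i _ => ?_
  simp only [add_comp, X_comp, C_comp, map_add, map_neg, expand_X, expand_C]
  rw [C_pow]
  ring

theorem coeff_prod_X_add_C_sq {R ι : Type*} [CommRing R] (s : Finset ι) (a : ι → R) (m : ℕ) :
    (∏ i ∈ s, (X + C (a i ^ 2))).coeff m =
      (∏ i ∈ s, (X + C (a i))).coeff m ^ 2 +
        2 * ∑ j ∈ Icc 1 m, (-1) ^ j * (∏ i ∈ s, (X + C (a i))).coeff (m - j) *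
          (∏ i ∈ s, (X + C (a i))).coeff (m + j) := by
  have sign_unit : IsUnit ((-1 : R) ^ m) := isUnit_one.neg.pow m
  rw [← sign_unit.mul_right_inj, ← coeff_two_mul_mul_comp_neg_X, prod_X_add_C_mul_comp_neg_X,
    coeff_expand_mul' two_pos, comp_neg_X_coeff, mul_comm]

theorem coeff_prod_range_X_add_C_of_recurrence {R : Type*} [CommSemiring R] (a : ℕ → R)
    (S : ℕ → ℕ → R) (zero_zero : S 0 0 = 1) (zero_succ : ∀ k, S 0 (k + 1) = 0)
    (succ_zero : ∀ n, S (n + 1) 0 = a n * S n 0)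
    (succ_succ : ∀ n k, S (n + 1) (k + 1) = S n k + a n * S n (k + 1)) (n k : ℕ) :
    (∏ i ∈ range n, (X + C (a i))).coeff k = S n k := by
  induction n generalizing k with
  | zero => cases k <;> simp [coeff_one, zero_zero, zero_succ]
  | succ n ih =>
    rw [prod_range_succ, mul_add, coeff_add, coeff_mul_C, ih]
    cases k with
    | zero => rw [coeff_mul_X_zero, succ_zero, zero_add, mul_comm]
    | succ k => rw [coeff_mul_X, ih, succ_succ, mul_comm]

theorem coeff_prod_range_X_add_C_natCast (R : Type*) [CommSemiring R] (n k : ℕ) :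
    (∏ i ∈ range n, (X + C (i : R))).coeff k = (stirling1 n k : R) := by
  refine coeff_prod_range_X_add_C_of_recurrence _ (fun n k => (stirling1 n k : R))
    ?_ ?_ ?_ ?_ n k
  · simp [stirling1]
  · simp [stirling1]
  · rintro (_ | n) <;> simp [stirling1]
  · simp [stirling1]

theorem coeff_prod_range_X_add_C_natCast_sq (R : Type*) [CommSemiring R] (n k : ℕ) :
    (∏ i ∈ range n, (X + C ((i : R) ^ 2))).coeff k = (T2 n k : R) := by
  refine coeff_prod_range_X_add_C_of_recurrence _ (fun n k => (T2 n k : R)) ?_ ?_ ?_ ?_ n k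
  · simp [T2]
  · simp [T2]
  · rintro (_ | n) <;> simp [T2]
  · simp [T2]

end PolynomialCoefficients

theorem stirling1_zero_right {n : ℕ} (hn : n ≠ 0) : stirling1 n 0 = 0 := by
  obtain ⟨n, rfl⟩ := Nat.exists_eq_succ_of_ne_zero hn
  rfl

theorem statement9 (n m : ℕ) (hm : 1 ≤ m) (hmn : m ≤ n) :
    (T2 n m : ℤ) = (stirling1 n m : ℤ) ^ 2 +
      2 * ∑ j ∈ Finset.Icc 1 (m - 1),
        (-1 : ℤ) ^ j * (stirling1 n (m - j) : ℤ) * (stirling1 n (m + j) : ℤ) := by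
  obtain ⟨k, rfl⟩ := Nat.exists_eq_add_of_le' hm
  have full_sum := coeff_prod_X_add_C_sq (Finset.range n) (fun i => (i : ℤ)) (k + 1)
  simp only [coeff_prod_range_X_add_C_natCast, coeff_prod_range_X_add_C_natCast_sq] at full_sum
  have last_factor : stirling1 n (k + 1 - (k + 1)) = 0 := by
    rw [Nat.sub_self, stirling1_zero_right (by lia)]
  rw [full_sum, Finset.sum_Icc_succ_top (by lia), last_factor, Nat.add_sub_cancel, Nat.cast_zero,
    mul_zero, zero_mul, add_zero]
end
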